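/- Let Γ be a nontrivial group and let ⪯ be a left-invariant linear order on Γ with positive cone P. Suppose ⪯ is an isolated point of the space of left orderings of Γ, i.e. there exists a finite set F of ⪯-positive elements such that every left-order positive cone on Γ containing F equals P. Then the Conradian soul of (Γ, ⪯) is nontrivial and admits only finitely many orderings: there exists a nontrivial subgroup C of Γ that is ⪯-convex, whose restricted ordering is Conradian, which contains every ⪯-convex subgroup whose restricted ordering is Conradian, and such that the set of left-order positive cones on C is finite. -/

import Mathlib

/-- A subgroup `C` of a left-ordered group is `≤`-convex. -/
def IsConvexSubgroup {Γ : Type*} [Group Γ] [LinearOrder Γ] (C : Subgroup Γ) : Prop :=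
  ∀ c₁ ∈ C, ∀ c₂ ∈ C, ∀ f : Γ, c₁ < f → f < c₂ → f ∈ C

/-- The restriction of the ordering to a subgroup `C` is Conradian. -/
def IsConradianOn {Γ : Type*} [Group Γ] [LinearOrder Γ] (C : Subgroup Γ) : Prop :=
  ∀ f ∈ C, ∀ g ∈ C, 1 < f → 1 < g → ∃ n : ℕ, 0 < n ∧ g < f * g ^ n

/-- `P` is the positive cone of a left-invariant linear order on the group `G`. -/
def IsPosCone {G : Type*} [Group G] (P : Set G) : Prop :=
  (∀ a ∈ P, ∀ b ∈ P, a * b ∈ P) ∧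
  (∀ g : G, g ∈ P ∨ g⁻¹ ∈ P ∨ g = 1) ∧
  (1 : G) ∉ P ∧
  ∀ g ∈ P, g⁻¹ ∉ P

/-!
Isolation passes to convex subgroups and to quotients by convex normal ones, and every jump of
convex subgroups must contain one of the finitely many prescribed positive elements. Hence an
isolated Conradian order has a finite convex series, whose Archimedean quotients are abelian by
Hölder's theorem; being isolated as well, they have rank one, so each has only two orders.

It remains to see that every left order has the same convex subgroups. If `D` is the largest proper
convex subgroup and `M` the next one, then `G / M` cannot be bi-ordered: twisting the order by
conjugating with large powers would give nearby orders. So some `t` reverses the signs of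
`D` outside `M`, and this relation is the same for all orders. In an order for which `D` is
not convex, `t` would be dominated by an element of `D`, which is incompatible with the reversal.

The soul is nontrivial because, for a positive `g` below all of the prescribed elements, the order
conjugated by `g` is again the given one. Right multiplication by such elements is therefore
monotone, and the convex subgroup generated by the largest of them is Conradian.
-/

open scoped Pointwise

section Cones

variable {G H : Type*} [Group G] [Group H] {P : Set G}

theorem isPosCone_one_lt [LinearOrder G] [MulLeftMono G] : IsPosCone {g : G | 1 < g} :=
  ⟨fun _ ha _ hb ↦ one_lt_mul' ha hb,
    fun g ↦ (lt_trichotomy 1 g).imp_right fun h ↦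
      h.symm.imp Left.one_lt_inv_iff.mpr Eq.symm,
    lt_irrefl 1, fun _ hg h ↦ lt_asymm hg (Left.one_lt_inv_iff.mp h)⟩

namespace IsPosCone

theorem of_mul_mem (hmul : ∀ a ∈ P, ∀ b ∈ P, a * b ∈ P)
    (htotal : ∀ g, g ∈ P ∨ g⁻¹ ∈ P ∨ g = 1) (hone : 1 ∉ P) : IsPosCone P :=
  ⟨hmul, htotal, hone, fun g hg hg' ↦ hone (mul_inv_cancel g ▸ hmul g hg _ hg')⟩

theorem mul_mem (hP : IsPosCone P) {a b : G} (ha : a ∈ P) (hb : b ∈ P) : a * b ∈ P :=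
  hP.1 a ha b hb

theorem one_notMem (hP : IsPosCone P) : 1 ∉ P := hP.2.2.1

theorem ne_one (hP : IsPosCone P) {a : G} (ha : a ∈ P) : a ≠ 1 :=
  fun h ↦ hP.one_notMem (h ▸ ha)

theorem inv_notMem (hP : IsPosCone P) {a : G} (ha : a ∈ P) : a⁻¹ ∉ P := hP.2.2.2 a ha

theorem inv_mem_iff_notMem (hP : IsPosCone P) {a : G} (ha : a ≠ 1) : a⁻¹ ∈ P ↔ a ∉ P :=
  ⟨fun h h' ↦ hP.inv_notMem h' h, fun h ↦ ((hP.2.1 a).resolve_left h).resolve_right ha⟩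

theorem exists_linearOrder (hP : IsPosCone P) :
    ∃ (_ : LinearOrder G) (_ : MulLeftMono G), P = {g | 1 < g} := by
  classical
  let r : G → G → Prop := fun a b ↦ a⁻¹ * b ∈ P
  have hr : IsStrictTotalOrder G r :=
    { irrefl := fun a ↦ by simpa [r] using hP.one_notMem
      trans := fun a b c hab hbc ↦ by simpa [r, mul_assoc] using hP.mul_mem hab hbc
      trichotomous := fun a b hab hba ↦ by
        simpa [inv_mul_eq_one, r, hab, hba] using hP.2.1 (a⁻¹ * b) }
  let _ : LinearOrder G := linearOrderOfSTO r
  have lt_iff (a b : G) : a < b ↔ a⁻¹ * b ∈ P := Iff.rfl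
  refine ⟨inferInstance, ⟨fun c a b hab ↦ hab.eq_or_lt.elim (fun h ↦ h ▸ le_rfl) fun h ↦ ?_⟩, ?_⟩
  · exact le_of_lt ((lt_iff _ _).mpr (by simpa [mul_assoc] using (lt_iff _ _).mp h))
  · ext g
    simp [lt_iff]

theorem pow_mem (hP : IsPosCone P) {a : G} (ha : a ∈ P) {n : ℕ} (hn : n ≠ 0) : a ^ n ∈ P := by
  obtain ⟨_, _, rfl⟩ := hP.exists_linearOrder
  exact one_lt_pow' ha hn

theorem preimage (hP : IsPosCone P) {φ : H →* G} (hφ : Function.Injective φ) :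
    IsPosCone (φ ⁻¹' P) :=
  of_mul_mem (fun a ha b hb ↦ by simpa using hP.mul_mem ha hb)
    (fun g ↦ by simpa [map_eq_one_iff φ hφ] using hP.2.1 (φ g)) (by simpa using hP.one_notMem)

theorem subgroup (hP : IsPosCone P) (K : Subgroup G) : IsPosCone (K.subtype ⁻¹' P) :=
  hP.preimage K.subtype_injective

theorem inv (hP : IsPosCone P) : IsPosCone P⁻¹ :=
  of_mul_mem (fun a ha b hb ↦ by simpa using hP.mul_mem hb ha)
    (fun g ↦ by simpa [or_left_comm] using hP.2.1 g) (by simpa using hP.one_notMem)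

theorem pow_mem_iff (hP : IsPosCone P) {a : G} {n : ℕ} (hn : n ≠ 0) : a ^ n ∈ P ↔ a ∈ P := by
  refine ⟨fun h ↦ by_contra fun ha ↦ ?_, fun h ↦ hP.pow_mem h hn⟩
  obtain rfl | h1 := eq_or_ne a 1
  · exact hP.one_notMem (by simpa using h)
  · exact hP.inv_notMem h (by simpa using hP.pow_mem ((hP.inv_mem_iff_notMem h1).mpr ha) hn)

theorem exists_mem_notMem_of_not_le (hP : IsPosCone P) {K L : Subgroup G} (h : ¬K ≤ L) :
    ∃ x ∈ P, x ∈ K ∧ x ∉ L := by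
  obtain ⟨x, hxK, hxL⟩ := SetLike.not_le_iff_exists.mp h
  rcases hP.2.1 x with hx | hx | rfl
  · exact ⟨x, hx, hxK, hxL⟩
  · exact ⟨x⁻¹, hx, K.inv_mem hxK, by simpa using hxL⟩
  · exact (hxL L.one_mem).elim

theorem le_of_forall_mem (hP : IsPosCone P) {K L : Subgroup G} (h : ∀ x ∈ P, x ∈ K → x ∈ L) :
    K ≤ L := by
  by_contra hKL
  obtain ⟨x, hx, hxK, hxL⟩ := hP.exists_mem_notMem_of_not_le hKL
  exact hxL (h x hx hxK)

theorem mem_or_eq_one_of_mem_closure (hP : IsPosCone P) {S : Set G} (hS : S ⊆ P) {x : G}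
    (hx : x ∈ Submonoid.closure S) : x ∈ P ∨ x = 1 := by
  induction hx using Submonoid.closure_induction with
  | mem x hx => exact Or.inl (hS hx)
  | one => exact Or.inr rfl
  | mul x y _ _ hx hy =>
    rcases hx with hx | rfl <;> rcases hy with hy | rfl
    · exact Or.inl (hP.mul_mem hx hy)
    · simpa using Or.inl hx
    · simpa using Or.inl hy
    · simp

theorem inv_notMem_closure (hP : IsPosCone P) {S : Set G} (hS : S ⊆ P) {x : G} (hx : x ∈ P) :
    x⁻¹ ∉ Submonoid.closure S := fun h ↦
  (hP.mem_or_eq_one_of_mem_closure hS h).elim (hP.inv_notMem hx)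
    fun h ↦ hP.ne_one hx (inv_eq_one.mp h)

end IsPosCone

/-- Convexity of `K` for the left order with positive cone `P`: an element between `1` and an
element of `K` lies in `K`. -/
def IsConvexFor (P : Set G) (K : Subgroup G) : Prop :=
  ∀ x ∈ P, ∀ c ∈ K, x⁻¹ * c ∈ P → x ∈ K

/-- The Conradian property, stated for the positive cone of a left order. -/
def IsConradianCone (P : Set G) : Prop :=
  ∀ f ∈ P, ∀ g ∈ P, ∃ n : ℕ, 0 < n ∧ g⁻¹ * (f * g ^ n) ∈ P

theorem isConvexSubgroup_iff_isConvexFor [LinearOrder G] [MulLeftMono G] {K : Subgroup G} :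
    IsConvexSubgroup K ↔ IsConvexFor {g | 1 < g} K := by
  refine ⟨fun hK x hx c hc hxc ↦ hK 1 K.one_mem c hc x hx (lt_inv_mul_iff_lt.mp hxc),
    fun hK a ha b hb x hax hxb ↦ (K.mul_mem_cancel_left (K.inv_mem ha)).mp ?_⟩
  exact hK _ (lt_inv_mul_iff_lt.mpr hax) _ (K.mul_mem (K.inv_mem ha) hb)
    (by simpa using hxb)

theorem IsConradianOn.isConradianCone [LinearOrder G] [MulLeftMono G] {K : Subgroup G}
    (hK : IsConradianOn K) : IsConradianCone (K.subtype ⁻¹' {g | 1 < g}) := fun f hf g hg ↦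
  (hK f f.2 g g.2 hf hg).imp fun _ ⟨hn, hlt⟩ ↦ ⟨hn, by simpa using hlt⟩

theorem IsConradianCone.preimage (hP : IsConradianCone P) (φ : H →* G) :
    IsConradianCone (φ ⁻¹' P) := fun f hf g hg ↦
  (hP (φ f) hf (φ g) hg).imp fun _ ⟨hn, h⟩ ↦ ⟨hn, by simpa using h⟩

namespace IsConvexFor

variable {K L : Subgroup G}

theorem mem_of_le [LinearOrder G] [MulLeftMono G] (hK : IsConvexFor {g | 1 < g} K) {x c : G}
    (hx : 1 ≤ x) (hc : c ∈ K) (hxc : x ≤ c) : x ∈ K := by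
  obtain rfl | hx := hx.eq_or_lt
  · exact K.one_mem
  obtain rfl | hxc := hxc.eq_or_lt
  · exact hc
  exact hK x hx c hc (lt_inv_mul_iff_lt.mpr hxc)

theorem lt_of_notMem [LinearOrder G] [MulLeftMono G] (hK : IsConvexFor {g | 1 < g} K) {x c : G}
    (hx : 1 < x) (hxK : x ∉ K) (hc : c ∈ K) : c < x :=
  lt_of_not_ge fun h ↦ hxK (hK.mem_of_le hx.le hc h)

theorem mul_mem_of_right_notMem (hK : IsConvexFor P K) (hP : IsPosCone P) {x c : G} (hx : x ∈ P)
    (hxK : x ∉ K) (hc : c ∈ K) : c * x ∈ P := by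
  obtain ⟨_, _, rfl⟩ := hP.exists_linearOrder
  simpa using mul_lt_mul_right (hK.lt_of_notMem hx hxK (K.inv_mem hc)) c

theorem mul_mem_of_left_notMem (hK : IsConvexFor P K) (hP : IsPosCone P) {x c : G} (hx : x ∈ P)
    (hxK : x ∉ K) (hc : c ∈ K) : x * c ∈ P := by
  by_contra h
  have hne : x * c ≠ 1 := fun h ↦ hxK (eq_inv_of_mul_eq_one_left h ▸ K.inv_mem hc)
  have := hK _ ((hP.inv_mem_iff_notMem hne).mpr h) _ (K.inv_mem hc) (by simpa using hx)
  exact hxK ((K.mul_mem_cancel_right hc).mp (by simpa using K.inv_mem this))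

theorem mul_mem_diff (hK : IsConvexFor P K) (hP : IsPosCone P) {a b : G} (ha : a ∈ P \ (K : Set G))
    (hb : b ∈ P) : a * b ∈ P \ (K : Set G) :=
  ⟨hP.mul_mem ha.1 hb, fun h ↦ ha.2 (hK a ha.1 _ h (by simpa using hb))⟩

theorem mem_of_pow_mem (hK : IsConvexFor P K) (hP : IsPosCone P) {x : G} {n : ℕ} (hn : n ≠ 0)
    (h : x ^ n ∈ K) : x ∈ K := by
  obtain ⟨_, _, rfl⟩ := hP.exists_linearOrder
  rcases le_total 1 x with hx | hx
  · exact hK.mem_of_le hx h (le_self_pow hx hn)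
  · rw [← K.inv_mem_iff]
    exact hK.mem_of_le (Left.one_le_inv_iff.mpr hx) (by simpa using K.inv_mem h)
      (le_self_pow (Left.one_le_inv_iff.mpr hx) hn)

theorem mem_of_zpow_mem (hK : IsConvexFor P K) (hP : IsPosCone P) {x : G} {n : ℤ} (hn : n ≠ 0)
    (h : x ^ n ∈ K) : x ∈ K := by
  refine hK.mem_of_pow_mem hP (Int.natAbs_ne_zero.mpr hn) ?_
  rcases n.natAbs_eq with hn' | hn' <;> rw [hn'] at h <;>
    simpa only [zpow_neg, inv_mem_iff, zpow_natCast] using h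

theorem bot (hP : IsPosCone P) : IsConvexFor P ⊥ := by
  rintro x hx c rfl h
  exact (hP.inv_notMem hx (by simpa using h)).elim

theorem top : IsConvexFor P ⊤ := fun _ _ _ _ _ ↦ trivial

theorem inv (hK : IsConvexFor P K) (hP : IsPosCone P) : IsConvexFor P⁻¹ K := fun x hx c hc h ↦ by
  refine by_contra fun hxK ↦ hP.inv_notMem ?_ h
  exact hK.mul_mem_of_left_notMem hP hx (by simpa using hxK) hc

theorem le_total (hP : IsPosCone P) (hK : IsConvexFor P K) (hL : IsConvexFor P L) :
    K ≤ L ∨ L ≤ K := by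
  by_contra! h
  obtain ⟨x, hx, hxK, hxL⟩ := hP.exists_mem_notMem_of_not_le h.1
  obtain ⟨y, hy, hyL, hyK⟩ := hP.exists_mem_notMem_of_not_le h.2
  obtain ⟨_, _, rfl⟩ := hP.exists_linearOrder
  exact lt_asymm (hK.lt_of_notMem hy hyK hxK) (hL.lt_of_notMem hx hxL hyL)

theorem directedOn (hP : IsPosCone P) {S : Set (Subgroup G)} (hS : ∀ K ∈ S, IsConvexFor P K) :
    DirectedOn (· ≤ ·) S := fun K hK L hL ↦
  (le_total hP (hS K hK) (hS L hL)).elim (fun h ↦ ⟨L, hL, h, le_rfl⟩) fun h ↦ ⟨K, hK, le_rfl, h⟩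

theorem sSup (hP : IsPosCone P) {S : Set (Subgroup G)} (hne : S.Nonempty)
    (hS : ∀ K ∈ S, IsConvexFor P K) : IsConvexFor P (sSup S) := fun x hx c hc h ↦ by
  obtain ⟨K, hK, hcK⟩ := (Subgroup.mem_sSup_of_directedOn hne (directedOn hP hS)).mp hc
  exact Subgroup.mem_sSup_of_mem hK (hS K hK x hx c hcK h)

theorem comap (hK : IsConvexFor P K) (φ : H →* G) : IsConvexFor (φ ⁻¹' P) (K.comap φ) :=
  fun x hx c hc h ↦ hK (φ x) hx (φ c) hc (by simpa using h)

theorem map_subtype {M : Subgroup L} (hM : IsConvexFor (L.subtype ⁻¹' P) M)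
    (hL : IsConvexFor P L) : IsConvexFor P (M.map L.subtype) := by
  rintro x hx _ ⟨c, hc, rfl⟩ h
  exact ⟨⟨x, hL x hx c c.2 h⟩, hM _ hx c hc h, rfl⟩

end IsConvexFor

/-- The positive cone of the order that compares by `P` outside the subgroup `L` and by the cone
`Q` inside it. -/
def glueCone (P : Set G) (L : Subgroup G) (Q : Set L) : Set G :=
  (↑) '' Q ∪ P \ L

theorem IsPosCone.glueCone (hP : IsPosCone P) {L : Subgroup G} (hL : IsConvexFor P L) {Q : Set L}
    (hQ : IsPosCone Q) : IsPosCone (glueCone P L Q) := by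
  refine of_mul_mem ?_ (fun g ↦ ?_) ?_
  · rintro _ (⟨a, ha, rfl⟩ | ha) _ (⟨b, hb, rfl⟩ | hb)
    · exact Or.inl ⟨a * b, hQ.mul_mem ha hb, rfl⟩
    · exact Or.inr ⟨hL.mul_mem_of_right_notMem hP hb.1 hb.2 a.2,
        fun h ↦ hb.2 ((L.mul_mem_cancel_left a.2).mp h)⟩
    · exact Or.inr ⟨hL.mul_mem_of_left_notMem hP ha.1 ha.2 b.2,
        fun h ↦ ha.2 ((L.mul_mem_cancel_right b.2).mp h)⟩
    · exact Or.inr (hL.mul_mem_diff hP ha hb.1)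
  · by_cases hg : g ∈ L
    · exact (hQ.2.1 ⟨g, hg⟩).imp (fun h ↦ Or.inl ⟨_, h, rfl⟩)
        (Or.imp (fun h ↦ Or.inl ⟨_, h, rfl⟩) (congrArg Subtype.val))
    · exact (hP.2.1 g).imp (fun h ↦ Or.inr ⟨h, hg⟩)
        (Or.imp_left fun h ↦ Or.inr ⟨h, by simpa using hg⟩)
  · rintro (⟨a, ha, h⟩ | ha)
    · exact hQ.ne_one ha (Subtype.ext h)
    · exact hP.one_notMem ha.1

theorem coe_mem_glueCone_iff {L : Subgroup G} {Q : Set L} {x : L} :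
    (x : G) ∈ glueCone P L Q ↔ x ∈ Q := by
  simp [glueCone]

theorem mem_glueCone_iff_of_notMem {L : Subgroup G} {Q : Set L} {x : G} (hx : x ∉ L) :
    x ∈ glueCone P L Q ↔ x ∈ P := by
  simp [glueCone, hx]

/-- The positive cone of the order induced on the quotient by a convex normal subgroup `D`. -/
def quotientCone (P : Set G) (D : Subgroup G) : Set (G ⧸ D) :=
  (↑) '' (P \ D)

theorem mk_mem_quotientCone_iff (hP : IsPosCone P) {D : Subgroup G} (hD : IsConvexFor P D)
    {x : G} : (x : G ⧸ D) ∈ quotientCone P D ↔ x ∈ P \ (D : Set G) := by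
  refine ⟨?_, Set.mem_image_of_mem _⟩
  rintro ⟨y, ⟨hy, hyD⟩, h⟩
  rw [QuotientGroup.eq] at h
  rw [← mul_inv_cancel_left y x]
  exact ⟨hD.mul_mem_of_left_notMem hP hy hyD h, fun hx ↦ hyD ((D.mul_mem_cancel_right h).mp hx)⟩

theorem IsPosCone.quotientCone (hP : IsPosCone P) {D : Subgroup G} [D.Normal]
    (hD : IsConvexFor P D) : IsPosCone (quotientCone P D) := by
  refine of_mul_mem ?_ (fun q ↦ ?_) ?_
  · rintro _ ⟨a, ha, rfl⟩ _ ⟨b, hb, rfl⟩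
    exact ⟨a * b, hD.mul_mem_diff hP ha hb.1, rfl⟩
  · obtain ⟨x, rfl⟩ := QuotientGroup.mk_surjective q
    by_cases hx : x ∈ D
    · exact Or.inr (Or.inr ((QuotientGroup.eq_one_iff x).mpr hx))
    · exact (hP.2.1 x).imp (fun h ↦ ⟨x, ⟨h, hx⟩, rfl⟩)
        (Or.imp (fun h ↦ ⟨x⁻¹, ⟨h, by simpa using hx⟩, rfl⟩) (congrArg _))
  · rintro ⟨a, ha, h⟩
    exact ha.2 ((QuotientGroup.eq_one_iff a).mp h)

/-- The positive cone of the lexicographic order that compares images under `π` by `Q` and breaks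
ties by `P`. -/
def lexCone (π : G →* H) (Q : Set H) (P : Set G) : Set G :=
  {x | π x ∈ Q ∨ π x = 1 ∧ x ∈ P}

theorem IsPosCone.lexCone (hP : IsPosCone P) (π : G →* H) {Q : Set H} (hQ : IsPosCone Q) :
    IsPosCone (lexCone π Q P) := by
  refine of_mul_mem ?_ (fun g ↦ ?_) ?_
  · rintro a (ha | ⟨ha, haP⟩) b (hb | ⟨hb, hbP⟩)
    · exact Or.inl (by simpa using hQ.mul_mem ha hb)
    · exact Or.inl (by simpa [hb] using ha)
    · exact Or.inl (by simpa [ha] using hb)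
    · exact Or.inr ⟨by simp [ha, hb], hP.mul_mem haP hbP⟩
  · rcases hQ.2.1 (π g) with h | h | h
    · exact Or.inl (Or.inl h)
    · exact Or.inr (Or.inl (Or.inl (by simpa using h)))
    · exact (hP.2.1 g).imp (fun h' ↦ Or.inr ⟨h, h'⟩)
        (Or.imp_left fun h' ↦ Or.inr ⟨by simp [h], h'⟩)
  · rintro (h | h)
    · exact hQ.one_notMem (by simpa using h)
    · exact hP.one_notMem h.2

/-- `P` is the only positive cone that contains the finite set `F`; the left order with positive
cone `P` is then an isolated point of the space of left orders. -/
def IsIsolatedBy (P : Set G) (F : Finset G) : Prop :=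
  (∀ f ∈ F, f ∈ P) ∧ ∀ Q, IsPosCone Q → (∀ f ∈ F, f ∈ Q) → Q = P

namespace IsIsolatedBy

variable {F : Finset G}

open Classical in
theorem subgroup (hF : IsIsolatedBy P F) (hP : IsPosCone P) {L : Subgroup G}
    (hL : IsConvexFor P L) : IsIsolatedBy (L.subtype ⁻¹' P) (F.subtype (· ∈ L)) := by
  refine ⟨fun f hf ↦ hF.1 _ (Finset.mem_subtype.mp hf), fun Q hQ hFQ ↦ ?_⟩
  have h := hF.2 _ (hP.glueCone hL hQ) fun f hf ↦ ?_
  · ext x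
    rw [← coe_mem_glueCone_iff (P := P), h, Set.mem_preimage, L.subtype_apply]
  · by_cases hfL : f ∈ L
    · exact Or.inl ⟨⟨f, hfL⟩, hFQ _ (Finset.mem_subtype.mpr hf), rfl⟩
    · exact Or.inr ⟨hF.1 f hf, hfL⟩

open Classical in
theorem quotient (hF : IsIsolatedBy P F) (hP : IsPosCone P) {D : Subgroup G} [D.Normal]
    (hD : IsConvexFor P D) :
    IsIsolatedBy (quotientCone P D) ((F.filter (· ∉ D)).image (↑)) := by
  refine ⟨?_, fun Q hQ hFQ ↦ ?_⟩
  · simp only [Finset.mem_image, Finset.mem_filter]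
    rintro _ ⟨f, ⟨hf, hfD⟩, rfl⟩
    exact ⟨f, ⟨hF.1 f hf, hfD⟩, rfl⟩
  have h := hF.2 _ (hP.lexCone (QuotientGroup.mk' D) hQ) fun f hf ↦ ?_
  · ext q
    obtain ⟨x, rfl⟩ := QuotientGroup.mk_surjective q
    rw [mk_mem_quotientCone_iff hP hD, ← h]
    by_cases hx : x ∈ D
    · simp [lexCone, hx, (QuotientGroup.eq_one_iff x).mpr hx, hQ.one_notMem]
    · simp [lexCone, hx]
  · by_cases hfD : f ∈ D
    · exact Or.inr ⟨(QuotientGroup.eq_one_iff f).mpr hfD, hF.1 f hf⟩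
    · exact Or.inl (hFQ _ (Finset.mem_image_of_mem _ (Finset.mem_filter.mpr ⟨hf, hfD⟩)))

/-- Otherwise reversing the order between `K` and `L` would give another cone containing `F`. -/
theorem exists_mem_sdiff (hF : IsIsolatedBy P F) (hP : IsPosCone P) {K L : Subgroup G}
    (hK : IsConvexFor P K) (hL : IsConvexFor P L) (hKL : K < L) :
    ∃ f ∈ F, f ∈ L ∧ f ∉ K := by
  by_contra! hcon
  have hflip := hP.inv.glueCone (hK.inv hP) (hP.subgroup K)
  have h := hF.2 _ (hP.glueCone hL (hflip.subgroup L)) fun f hf ↦ ?_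
  · obtain ⟨x, hxL, hxK⟩ := SetLike.exists_of_lt hKL
    have : x ∈ P⁻¹ ↔ x ∈ P := by
      conv_rhs => rw [← h, coe_mem_glueCone_iff (x := ⟨x, hxL⟩)]
      exact (mem_glueCone_iff_of_notMem hxK).symm
    have := hP.inv_mem_iff_notMem (a := x) fun h ↦ hxK (h ▸ K.one_mem)
    simp_all
  · by_cases hfL : f ∈ L
    · exact Or.inl ⟨⟨f, hfL⟩, Or.inl ⟨⟨f, hcon f hf hfL⟩, hF.1 f hf, rfl⟩, rfl⟩
    · exact Or.inr ⟨hF.1 f hf, hfL⟩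

end IsIsolatedBy

end Cones

section Conradian

variable {G : Type*} [Group G]

/-- The Archimedean property, stated for the positive cone of a left order. -/
def IsArchimedeanCone (P : Set G) : Prop :=
  ∀ a ∈ P, ∀ x, ∃ n : ℕ, x⁻¹ * a ^ n ∈ P

/-- `D` is the largest convex subgroup different from the whole group. -/
def IsMaximalProperConvex (P : Set G) (D : Subgroup G) : Prop :=
  IsGreatest {K | IsConvexFor P K ∧ K ≠ ⊤} D

/-- The subgroup of all elements bounded, together with their inverses, by an element of the
submonoid `S`; it is the smallest convex subgroup that contains `S`. -/
def convexClosure [LinearOrder G] [MulLeftMono G] (S : Submonoid G)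
    (hS : ∀ x, ∀ s ∈ S, ∀ t ∈ S, x ≤ s → ∃ u ∈ S, x * t ≤ u) : Subgroup G where
  carrier := {x | ∃ s ∈ S, x ≤ s ∧ x⁻¹ ≤ s}
  one_mem' := ⟨1, S.one_mem, by simp⟩
  inv_mem' := fun ⟨s, hs, h, h'⟩ ↦ ⟨s, hs, h', by simpa using h⟩
  mul_mem' := by
    rintro a b ⟨s, hs, has, has'⟩ ⟨t, ht, hbt, hbt'⟩
    obtain ⟨u, hu, hau⟩ := hS a s hs t ht has
    obtain ⟨v, hv, hbv⟩ := hS b⁻¹ t ht s hs hbt'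
    have hab : a * b ≤ u := (mul_le_mul_right hbt a).trans hau
    have hab' : (a * b)⁻¹ ≤ v := by
      rw [mul_inv_rev]
      exact (mul_le_mul_right has' b⁻¹).trans hbv
    exact (le_total u v).elim (fun h ↦ ⟨v, hv, hab.trans h, hab'⟩)
      fun h ↦ ⟨u, hu, hab, hab'.trans h⟩

section LinearOrder

variable [LinearOrder G] [MulLeftMono G]

section convexClosure

variable {S : Submonoid G} {hS : ∀ x, ∀ s ∈ S, ∀ t ∈ S, x ≤ s → ∃ u ∈ S, x * t ≤ u}

theorem mem_convexClosure_of_le {x s : G} (hx : 1 ≤ x) (hs : s ∈ S) (hxs : x ≤ s) :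
    x ∈ convexClosure S hS :=
  ⟨s, hs, hxs, (Left.inv_le_one_iff.mpr hx).trans (hx.trans hxs)⟩

theorem isConvexFor_convexClosure : IsConvexFor {g | 1 < g} (convexClosure S hS) :=
  fun _ hx _ ⟨_, hs, hcs, _⟩ h ↦
    mem_convexClosure_of_le (le_of_lt hx) hs ((lt_inv_mul_iff_lt.mp h).le.trans hcs)

end convexClosure

namespace IsConradianCone

variable {D : Subgroup G}

theorem lt_mul_sq (hC : IsConradianCone {g : G | 1 < g}) {f g : G} (hf : 1 < f) (hg : 1 < g) :
    g < f * g ^ 2 := by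
  by_contra! h
  have hbg : f * g * g ≤ g := by simpa [sq, mul_assoc] using h
  have pow_mul_le (n : ℕ) : (f * g) ^ n * g ≤ g := by
    induction n with
    | zero => simp
    | succ n ih => exact (pow_succ (f * g) n).symm ▸
        ((mul_assoc _ _ g).trans_le (mul_le_mul_right hbg _)).trans ih
  obtain ⟨n, -, hn⟩ := hC f hf (f * g) (one_lt_mul' hf hg)
  have hbn : (f * g) ^ n ≤ g := (le_mul_of_one_le_right' hg.le).trans (pow_mul_le n)
  exact (lt_inv_mul_iff_lt.mp hn).not_ge (mul_le_mul_right hbn f)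

theorem mul_lt_pow_three (hC : IsConradianCone {g : G | 1 < g}) {x g : G} (hg : 1 < g)
    (hxg : x < g) : x * g < g ^ 3 := by
  have := hC.lt_mul_sq (lt_inv_mul_iff_lt.mpr hxg) hg
  rwa [mul_assoc, lt_inv_mul_iff_mul_lt, ← pow_succ'] at this

theorem exists_mul_pow_le (hC : IsConradianCone {g : G | 1 < g}) {f : G} (hf : 1 < f) (x : G) :
    ∀ s ∈ Submonoid.powers f, ∀ t ∈ Submonoid.powers f, x ≤ s →
      ∃ u ∈ Submonoid.powers f, x * t ≤ u := by
  rintro _ ⟨m, rfl⟩ _ ⟨n, rfl⟩ hx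
  let k := max m n + 1
  have hk : ∀ i ≤ max m n, f ^ i < f ^ k := fun i hi ↦ pow_lt_pow_right' hf (Nat.lt_succ_of_le hi)
  refine ⟨(f ^ k) ^ 3, ⟨k * 3, pow_mul f k 3⟩, le_of_lt ?_⟩
  calc x * f ^ n < x * f ^ k := mul_lt_mul_right (hk n (le_max_right m n)) x
    _ < (f ^ k) ^ 3 := hC.mul_lt_pow_three (one_lt_pow' hf (Nat.succ_ne_zero _))
        (hx.trans_lt (hk m (le_max_left m n)))

theorem exists_lt_pow (hC : IsConradianCone {g : G | 1 < g})
    (hD : IsMaximalProperConvex {g : G | 1 < g} D) {f : G} (hf : 1 < f) (hfD : f ∉ D) (x : G) :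
    ∃ n : ℕ, x < f ^ n := by
  let K := convexClosure (Submonoid.powers f) (hC.exists_mul_pow_le hf)
  have hfK : f ∈ K := mem_convexClosure_of_le hf.le (Submonoid.mem_powers f) le_rfl
  have hK : K = ⊤ := by_contra fun h ↦ hfD (hD.2 ⟨isConvexFor_convexClosure, h⟩ hfK)
  obtain ⟨_, ⟨n, rfl⟩, hx, -⟩ : x ∈ K := hK ▸ Subgroup.mem_top x
  exact ⟨n + 1, hx.trans_lt (pow_lt_pow_right' hf n.lt_succ_self)⟩

theorem normal_of_isMaximalProperConvex (hC : IsConradianCone {g : G | 1 < g})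
    (hD : IsMaximalProperConvex {g : G | 1 < g} D) : D.Normal := by
  have conv : IsConvexFor {g : G | 1 < g} D := hD.1.1
  have mem_of_pos_conj_mem (g : G)
      (hg : ∀ d ∈ D, 1 < g * d * g⁻¹ → g * d * g⁻¹ ∈ D) (d : G) (hd : d ∈ D) :
      g * d * g⁻¹ ∈ D := by
    rcases lt_trichotomy (g * d * g⁻¹) 1 with h | h | h
    · rw [← D.inv_mem_iff, conj_inv]
      exact hg _ (D.inv_mem hd) (by rw [← conj_inv]; exact Left.one_lt_inv_iff.mpr h)
    · exact h ▸ D.one_mem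
    · exact hg d hd h
  have conj_inv_mem {h : G} (hh : 1 < h) (hhD : h ∉ D) :
      ∀ d ∈ D, h⁻¹ * d * h⁻¹⁻¹ ∈ D := by
    refine mem_of_pos_conj_mem _ fun d hd hpos ↦ by_contra fun hcon ↦ ?_
    obtain ⟨n, hn⟩ := hC.exists_lt_pow hD hpos hcon (h ^ 2)
    rw [conj_pow, inv_inv, mul_assoc, lt_inv_mul_iff_mul_lt, ← pow_succ'] at hn
    exact lt_asymm hn (hC.mul_lt_pow_three hh (conv.lt_of_notMem hh hhD (D.pow_mem hd n)))
  have conj_mem {h : G} (hh : 1 < h) (hhD : h ∉ D) : ∀ d ∈ D, h * d * h⁻¹ ∈ D := by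
    refine mem_of_pos_conj_mem _ fun d hd hpos ↦ by_contra fun hcon ↦ ?_
    obtain ⟨n, hn⟩ := hC.exists_lt_pow hD hpos hcon h
    rw [conj_pow, mul_assoc, lt_mul_iff_one_lt_right'] at hn
    refine isPosCone_one_lt.inv_notMem hn ?_
    simpa using conv.mul_mem_of_left_notMem isPosCone_one_lt hh hhD
      (D.inv_mem (D.pow_mem hd n))
  refine ⟨fun d hd h ↦ ?_⟩
  by_cases hhD : h ∈ D
  · exact D.mul_mem (D.mul_mem hhD hd) (D.inv_mem hhD)
  rcases lt_trichotomy h 1 with hh | rfl | hh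
  · simpa using conj_inv_mem (Left.one_lt_inv_iff.mpr hh) (by simpa using hhD) d hd
  · simpa using hd
  · exact conj_mem hh hhD d hd

end IsConradianCone

end LinearOrder

namespace IsConradianCone

variable {P : Set G} {D : Subgroup G}

theorem normal (hC : IsConradianCone P) (hP : IsPosCone P) (hD : IsMaximalProperConvex P D) :
    D.Normal := by
  obtain ⟨_, _, rfl⟩ := hP.exists_linearOrder
  exact hC.normal_of_isMaximalProperConvex hD

theorem isArchimedeanCone_quotientCone [D.Normal] (hC : IsConradianCone P) (hP : IsPosCone P)
    (hD : IsMaximalProperConvex P D) : IsArchimedeanCone (quotientCone P D) := by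
  obtain ⟨_, _, rfl⟩ := hP.exists_linearOrder
  rintro _ ⟨a, ⟨ha, haD⟩, rfl⟩ q
  obtain ⟨x, rfl⟩ := QuotientGroup.mk_surjective q
  obtain ⟨n, hn⟩ := hC.exists_lt_pow hD ha haD x
  have hpos : x⁻¹ * a ^ n ∈ {g | 1 < g} := lt_inv_mul_iff_lt.mpr hn
  refine ⟨n + 1, x⁻¹ * a ^ n * a, ⟨hP.mul_mem hpos ha, fun h ↦ haD ?_⟩,
    by simp [pow_succ, mul_assoc]⟩
  have hmem : x⁻¹ * a ^ n ∈ D := hD.1.1 _ hpos _ h (by rwa [inv_mul_cancel_left])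
  exact (D.mul_mem_cancel_left hmem).mp h

end IsConradianCone

section Hoelder

variable [LinearOrder G] [MulLeftMono G]

theorem mulRightMono_of_one_lt_conj (h : ∀ g f : G, 1 < f → 1 < g * f * g⁻¹) : MulRightMono G := by
  refine ⟨fun z x y hxy ↦ hxy.eq_or_lt.elim (fun h ↦ h ▸ le_rfl) fun hlt ↦ le_of_lt ?_⟩
  simpa [← lt_inv_mul_iff_lt, mul_assoc] using h z⁻¹ _ (lt_inv_mul_iff_lt.mpr hlt)

namespace IsArchimedeanCone

theorem one_lt_conj (hA : IsArchimedeanCone {g : G | 1 < g}) {f : G} (hf : 1 < f) (g : G) :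
    1 < g * f * g⁻¹ := by
  replace hA (a : G) (ha : 1 < a) (x : G) : ∃ n : ℕ, x < a ^ n := by simpa using hA a ha x
  by_contra! h
  have hlt : 1 < (g * f * g⁻¹)⁻¹ :=
    Left.one_lt_inv_iff.mpr (h.lt_of_ne fun h ↦ hf.ne' (conj_eq_one_iff.mp h))
  rw [conj_inv] at hlt
  rcases lt_trichotomy g 1 with hg | rfl | hg
  · obtain ⟨n, hn⟩ := hA f hf g⁻¹
    have h1 : 1 ≤ g * (f ^ n)⁻¹ * g⁻¹ := by
      simpa [conj_pow] using one_le_pow_of_one_le' hlt.le n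
    have h2 : g⁻¹ ≤ (f ^ n)⁻¹ * g⁻¹ := by simpa [mul_assoc] using mul_le_mul_right h1 g⁻¹
    have h3 : f ^ n ≤ g⁻¹ :=
      le_of_mul_le_mul_left' (a := (f ^ n)⁻¹)
        (by simpa using (Left.one_lt_inv_iff.mpr hg).le.trans h2)
    exact hn.not_ge h3
  · exact lt_asymm hf (by simpa using hlt)
  · obtain ⟨n, hn⟩ := hA _ hlt g
    rw [conj_pow, mul_assoc, lt_mul_iff_one_lt_right', ← Left.inv_lt_one_iff] at hn
    exact lt_asymm (one_lt_mul_of_lt_of_le' hg (one_le_pow_of_one_le' hf.le n))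
      (by simpa using hn)

theorem mulRightMono (hA : IsArchimedeanCone {g : G | 1 < g}) : MulRightMono G :=
  mulRightMono_of_one_lt_conj fun g _ hf ↦ hA.one_lt_conj hf g

variable [MulRightMono G]

theorem exists_zpow_le_lt (hA : IsArchimedeanCone {g : G | 1 < g}) {x : G} (hx : 1 < x) (a : G) :
    ∃ m : ℤ, x ^ m ≤ a ∧ a < x ^ (m + 1) := by
  obtain ⟨n, hn⟩ := hA x hx a
  obtain ⟨k, hk⟩ := hA x hx a⁻¹
  have hmono : StrictMono fun m : ℤ ↦ x ^ m := strictMono_int_of_lt_succ fun m ↦ by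
    simpa [zpow_add_one] using hx
  obtain ⟨m, hm, hmax⟩ := Int.exists_greatest_of_bdd (P := fun m ↦ x ^ m ≤ a)
    ⟨n, fun z hz ↦ (hmono.lt_iff_lt.mp (hz.trans_lt (by simpa using hn))).le⟩
    ⟨-k, by simpa [inv_le_iff_one_le_mul] using le_of_lt hk⟩
  exact ⟨m, hm, lt_of_not_ge fun h ↦ (lt_add_one m).not_ge (hmax _ h)⟩

theorem inv_mul_lt_mul_self (hA : IsArchimedeanCone {g : G | 1 < g}) {x : G} (hx : 1 < x)
    (a b : G) : (b * a)⁻¹ * (a * b) < x * x := by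
  obtain ⟨m, hm, hm'⟩ := hA.exists_zpow_le_lt hx a
  obtain ⟨n, hn, hn'⟩ := hA.exists_zpow_le_lt hx b
  rw [inv_mul_lt_iff_lt_mul]
  calc a * b < x ^ (m + 1) * x ^ (n + 1) := mul_lt_mul_of_lt_of_lt hm' hn'
    _ = x ^ n * x ^ m * (x * x) := by group
    _ ≤ b * a * (x * x) := by gcongr

theorem exists_zpow_eq (hA : IsArchimedeanCone {g : G | 1 < g}) {c : G} (hc : 1 < c)
    (hmin : ∀ y, 1 < y → c ≤ y) (a : G) : ∃ m : ℤ, c ^ m = a := by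
  obtain ⟨m, hm, hm'⟩ := hA.exists_zpow_le_lt hc a
  refine ⟨m, hm.eq_or_lt.resolve_right fun h ↦ ?_⟩
  refine (hmin _ (lt_inv_mul_iff_lt.mpr h)).not_gt (inv_mul_lt_iff_lt_mul.mpr ?_)
  rwa [← zpow_add_one]

/-- Hölder's theorem. -/
theorem mul_comm (hA : IsArchimedeanCone {g : G | 1 < g}) (a b : G) : a * b = b * a := by
  suffices key : ∀ a b : G, a * b ≤ b * a from le_antisymm (key a b) (key b a)
  intro a b
  by_contra! hab
  obtain ⟨c, hc, hcx⟩ : ∃ c : G, 1 < c ∧ ∀ x, 1 < x → c < x * x :=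
    ⟨_, lt_inv_mul_iff_lt.mpr hab, fun x hx ↦ hA.inv_mul_lt_mul_self hx a b⟩
  have hmin (y : G) (hy : 1 < y) : c ≤ y := by
    by_contra! hyc
    have hyc' : y⁻¹ * c < y := inv_mul_lt_iff_lt_mul.mpr (hcx y hy)
    refine (hcx _ (lt_inv_mul_iff_lt.mpr hyc)).not_ge ?_
    calc y⁻¹ * c * (y⁻¹ * c) ≤ y * (y⁻¹ * c) := by gcongr
      _ = c := mul_inv_cancel_left y c
  obtain ⟨m, rfl⟩ := hA.exists_zpow_eq hc hmin a
  obtain ⟨n, rfl⟩ := hA.exists_zpow_eq hc hmin b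
  exact hab.ne ((Commute.refl c).zpow_zpow n m)

end IsArchimedeanCone

end Hoelder

theorem IsArchimedeanCone.mul_comm_of_isPosCone {P : Set G} (hA : IsArchimedeanCone P)
    (hP : IsPosCone P) (a b : G) : a * b = b * a := by
  obtain ⟨_, _, rfl⟩ := hP.exists_linearOrder
  have := hA.mulRightMono
  exact hA.mul_comm a b

end Conradian

section RankOne

variable {A B : Type*} [Group A] [Group B] {P : Set A}

/-- Abelian groups in which any two nontrivial elements have a common nontrivial power, i.e.
abelian groups of rank at most one when torsion-free. -/
structure IsRankOneAbelian (A : Type*) [Group A] : Prop where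
  mul_comm : ∀ a b : A, a * b = b * a
  exists_zpow_eq_zpow : ∀ a b : A, a ≠ 1 → b ≠ 1 → ∃ m n : ℤ, m ≠ 0 ∧ n ≠ 0 ∧ a ^ m = b ^ n

namespace IsRankOneAbelian

theorem of_surjective (hA : IsRankOneAbelian A) {φ : A →* B} (hφ : Function.Surjective φ) :
    IsRankOneAbelian B where
  mul_comm := hφ.forall₂.mpr fun a b ↦ by rw [← map_mul, hA.mul_comm, map_mul]
  exists_zpow_eq_zpow := hφ.forall₂.mpr fun a b ha hb ↦ by
    obtain ⟨m, n, hm, hn, h⟩ :=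
      hA.exists_zpow_eq_zpow a b (fun h ↦ ha (by simp [h])) (fun h ↦ hb (by simp [h]))
    exact ⟨m, n, hm, hn, by rw [← map_zpow, h, map_zpow]⟩

theorem exists_pow_eq_pow (hA : IsRankOneAbelian A) (hP : IsPosCone P) {a b : A} (ha : a ∈ P)
    (hb : b ∈ P) : ∃ m n : ℕ, m ≠ 0 ∧ n ≠ 0 ∧ a ^ m = b ^ n := by
  obtain ⟨m, n, hm, hn, h⟩ := hA.exists_zpow_eq_zpow a b (hP.ne_one ha) (hP.ne_one hb)
  have hm' := Int.natAbs_ne_zero.mpr hm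
  have hn' := Int.natAbs_ne_zero.mpr hn
  refine ⟨m.natAbs, n.natAbs, hm', hn', ?_⟩
  have not_inv : a ^ m.natAbs ≠ (b ^ n.natAbs)⁻¹ := fun h ↦
    hP.inv_notMem (hP.pow_mem hb hn') (h ▸ hP.pow_mem ha hm')
  rcases m.natAbs_eq with hm | hm <;> rcases n.natAbs_eq with hn | hn <;> rw [hm, hn] at h <;>
    simp only [zpow_neg, zpow_natCast, inv_eq_iff_eq_inv, inv_inv] at h
  exacts [h, (not_inv h).elim, (not_inv h).elim, h]

theorem isArchimedeanCone (hA : IsRankOneAbelian A) (hP : IsPosCone P) : IsArchimedeanCone P := by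
  intro a ha x
  by_cases hx : x ∈ P
  · obtain ⟨m, n, -, hn, h⟩ := hA.exists_pow_eq_pow hP ha hx
    refine ⟨m * 2, ?_⟩
    have : x⁻¹ * a ^ (m * 2) = x ^ (n * 2 - 1) := by
      rw [pow_mul, h, ← pow_mul, ← mul_pow_sub_one (by lia : n * 2 ≠ 0), inv_mul_cancel_left]
    exact this ▸ hP.pow_mem hx (by lia)
  · refine ⟨1, ?_⟩
    obtain rfl | hx1 := eq_or_ne x 1
    · simpa using ha
    · simpa using hP.mul_mem ((hP.inv_mem_iff_notMem hx1).mpr hx) ha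

end IsRankOneAbelian

end RankOne

section CommGroup

variable {A : Type*} [CommGroup A] {P S : Set A} {M : Submonoid A} {F : Finset A}

theorem eq_one_of_mem_sup_powers (hM : ∀ x ∈ M, x⁻¹ ∈ M → x = 1) {g : A}
    (hg : ∀ n : ℕ, n ≠ 0 → (g ^ n)⁻¹ ∉ M) :
    ∀ x ∈ M ⊔ Submonoid.powers g, x⁻¹ ∈ M ⊔ Submonoid.powers g → x = 1 := by
  intro x hx hx'
  obtain ⟨a, ha, _, ⟨i, rfl⟩, rfl⟩ := Submonoid.mem_sup.mp hx
  obtain ⟨b, hb, _, ⟨j, rfl⟩, h⟩ := Submonoid.mem_sup.mp hx'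
  have hab : a * b = (g ^ (i + j))⁻¹ := by
    rw [eq_inv_iff_mul_eq_one, pow_add, mul_mul_mul_comm, h, mul_inv_cancel]
  obtain ⟨rfl, rfl⟩ : i = 0 ∧ j = 0 := by
    by_contra hij
    exact hg (i + j) (by lia) (hab ▸ M.mul_mem ha hb)
  simpa using hM a ha (eq_inv_of_mul_eq_one_right (by simpa using hab) ▸ hb)

theorem exists_isPosCone_of_pointed [IsMulTorsionFree A] (hM : ∀ x ∈ M, x⁻¹ ∈ M → x = 1) :
    ∃ Q : Set A, IsPosCone Q ∧ ∀ x ∈ M, x ≠ 1 → x ∈ Q := by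
  let T : Set (Submonoid A) := {N | ∀ x ∈ N, x⁻¹ ∈ N → x = 1}
  have sSup_mem (c : Set (Submonoid A)) (hcT : c ⊆ T) (hc : IsChain (· ≤ ·) c) (N : Submonoid A)
      (hN : N ∈ c) : sSup c ∈ T := fun x hx hx' ↦ by
    rw [Submonoid.mem_sSup_of_directedOn ⟨N, hN⟩ hc.directedOn] at hx hx'
    obtain ⟨K, hK, hxK⟩ := hx
    obtain ⟨L, hL, hxL⟩ := hx'
    rcases hc.total hK hL with h | h
    exacts [hcT hL x (h hxK) hxL, hcT hK x hxK (h hxL)]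
  obtain ⟨N, hMN, hN⟩ := zorn_le_nonempty₀ T
    (fun c hcT hc N hN ↦ ⟨sSup c, sSup_mem c hcT hc N hN, fun _ ↦ le_sSup⟩) M hM
  have exists_pow_inv_mem {g : A} (hg : g ∉ N) : ∃ n : ℕ, n ≠ 0 ∧ (g ^ n)⁻¹ ∈ N := by
    by_contra! h
    have := hN.le_of_ge (eq_one_of_mem_sup_powers hN.prop h) le_sup_left
    exact hg (this (le_sup_right (a := N) (Submonoid.mem_powers g)))
  refine ⟨N \ {1}, .of_mul_mem ?_ (fun g ↦ ?_) (by simp), fun x hx h1 ↦ ⟨hMN hx, h1⟩⟩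
  · rintro a ⟨ha, ha1⟩ b ⟨hb, _⟩
    refine ⟨N.mul_mem ha hb, fun h ↦ ha1 (hN.prop a ha ?_)⟩
    exact eq_inv_of_mul_eq_one_right h ▸ hb
  · by_contra! h
    obtain ⟨h1, h2, hg⟩ := h
    obtain ⟨m, hm, hgm⟩ := exists_pow_inv_mem (g := g) fun h ↦ h1 ⟨h, hg⟩
    obtain ⟨n, hn, hgn⟩ := exists_pow_inv_mem (g := g⁻¹) fun h ↦ h2 ⟨h, by simpa using hg⟩
    refine hg ((pow_eq_one_iff_left (mul_ne_zero hm hn)).mp (hN.prop _ ?_ ?_))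
    · rw [mul_comm, pow_mul]; simpa using N.pow_mem hgn m
    · rw [pow_mul]; simpa using N.pow_mem hgm n

namespace IsPosCone

theorem isMulTorsionFree (hP : IsPosCone P) : IsMulTorsionFree A := by
  obtain ⟨_, _, rfl⟩ := hP.exists_linearOrder
  infer_instance

theorem exists_pow_mem_closure_diff (hP : IsPosCone P) (hSP : S ⊆ P)
    (hS : ∀ g ∈ P, ∃ n : ℕ, n ≠ 0 ∧ g ^ n ∈ Submonoid.closure S) {a b : A} (ha : a ∈ S)
    (hb : b ∈ S) (hab : a⁻¹ * b ∈ P) {g : A} (hg : g ∈ P) :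
    ∃ n : ℕ, n ≠ 0 ∧ g ^ n ∈ Submonoid.closure (S \ {b}) := by
  let N := Submonoid.closure (S \ {b})
  have haN : a ∈ N := Submonoid.subset_closure ⟨ha, fun h ↦ by
    obtain rfl : a = b := h
    exact hP.one_notMem (by simpa using hab)⟩
  have mem_iff (x : A) : x ∈ Submonoid.closure S ↔ ∃ j : ℕ, ∃ c ∈ N, b ^ j * c = x := by
    rw [← Set.insert_sdiff_self_of_mem hb, Set.insert_eq, Submonoid.closure_union,
      Submonoid.mem_sup]
    simp [Submonoid.mem_closure_singleton, N]
  obtain ⟨k, hk, hbk⟩ : ∃ k : ℕ, k ≠ 0 ∧ b ^ k ∈ N := by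
    obtain ⟨m, hm, h⟩ := hS _ hab
    obtain ⟨j, c, hc, h⟩ := (mem_iff _).mp h
    have hbm : b ^ m = a ^ m * c * b ^ j := by
      rw [mul_assoc, mul_comm c, h, mul_pow, ← mul_assoc, ← mul_pow, mul_inv_cancel, one_pow,
        one_mul]
    rcases lt_or_ge j m with hjm | hmj
    · refine ⟨m - j, by lia, ?_⟩
      rw [pow_sub b hjm.le, hbm, mul_inv_cancel_right]
      exact N.mul_mem (N.pow_mem haN m) hc
    · refine (hP.inv_notMem_closure hSP (hP.pow_mem (hSP ha) hm) ?_).elim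
      refine (mem_iff _).mpr ⟨j - m, c, hc, ?_⟩
      rw [eq_inv_iff_mul_eq_one, ← mul_eq_left (a := b ^ m), ← mul_assoc, ← mul_assoc,
        pow_mul_pow_sub b hmj, hbm, mul_comm (b ^ j * c), mul_comm (b ^ j), mul_assoc]
  obtain ⟨n, hn, h⟩ := hS g hg
  obtain ⟨j, c, hc, h⟩ := (mem_iff _).mp h
  refine ⟨n * k, mul_ne_zero hn hk, ?_⟩
  rw [pow_mul, ← h, mul_pow, ← pow_mul, mul_comm j, pow_mul]
  exact N.mul_mem (N.pow_mem hbk j) (N.pow_mem hc k)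

/-- A generating set with two elements is redundant: by `exists_pow_mem_closure_diff` the larger
of the two can be dropped. -/
theorem exists_forall_pow_mem_powers (hP : IsPosCone P) (F : Finset A) (hFP : ↑F ⊆ P)
    (hF : ∀ g ∈ P, ∃ n : ℕ, n ≠ 0 ∧ g ^ n ∈ Submonoid.closure (F : Set A)) :
    ∃ a : A, ∀ g ∈ P, ∃ n : ℕ, n ≠ 0 ∧ g ^ n ∈ Submonoid.powers a := by
  classical
  induction F using Finset.strongInduction with
  | H F ih =>
    by_cases hsub : (F : Set A).Subsingleton
    · obtain h | ⟨a, h⟩ := hsub.eq_empty_or_singleton <;> rw [h] at hF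
      · exact ⟨1, by simpa [Submonoid.powers_one] using hF⟩
      · exact ⟨a, by simpa [Submonoid.powers_eq_closure] using hF⟩
    · obtain ⟨a, ha, b, hb, hab⟩ : ∃ a ∈ F, ∃ b ∈ F, a⁻¹ * b ∈ P := by
        obtain ⟨a, ha, b, hb, hne⟩ := Set.not_subsingleton_iff.mp hsub
        by_cases h : a⁻¹ * b ∈ P
        · exact ⟨a, ha, b, hb, h⟩
        · have hne : a⁻¹ * b ≠ 1 := fun h ↦ hne (inv_mul_eq_one.mp h)
          exact ⟨b, hb, a, ha, by simpa using (hP.inv_mem_iff_notMem hne).mpr h⟩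
      refine ih (F.erase b) (Finset.erase_ssubset hb) ?_ fun g hg ↦ ?_
      · exact (Finset.coe_subset.mpr (Finset.erase_subset b F)).trans hFP
      · rw [Finset.coe_erase]
        exact hP.exists_pow_mem_closure_diff hFP hF ha hb hab hg

end IsPosCone

theorem IsIsolatedBy.exists_pow_mem_closure (hF : IsIsolatedBy P F) (hP : IsPosCone P) {g : A}
    (hg : g ∈ P) : ∃ n : ℕ, n ≠ 0 ∧ g ^ n ∈ Submonoid.closure (F : Set A) := by
  have := hP.isMulTorsionFree
  by_contra! h
  have pointed (x : A) (hx : x ∈ Submonoid.closure (F : Set A))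
      (hx' : x⁻¹ ∈ Submonoid.closure (F : Set A)) : x = 1 :=
    (hP.mem_or_eq_one_of_mem_closure hF.1 hx).resolve_left
      fun hx ↦ hP.inv_notMem_closure hF.1 hx hx'
  obtain ⟨Q, hQ, hMQ⟩ := exists_isPosCone_of_pointed
    (eq_one_of_mem_sup_powers pointed (g := g⁻¹) (by simpa using h))
  have hQP : Q = P := hF.2 Q hQ fun f hf ↦ hMQ f
    (le_sup_left (a := Submonoid.closure (F : Set A)) (Submonoid.subset_closure hf))
    (hP.ne_one (hF.1 f hf))
  refine hP.inv_notMem hg (hQP ▸ hMQ _ ?_ (inv_ne_one.mpr (hP.ne_one hg)))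
  exact le_sup_right (a := Submonoid.closure (F : Set A)) (Submonoid.mem_powers g⁻¹)

end CommGroup

theorem IsIsolatedBy.isRankOneAbelian {A : Type*} [Group A] {P : Set A} {F : Finset A}
    (hF : IsIsolatedBy P F) (hP : IsPosCone P) (hcomm : ∀ a b : A, a * b = b * a) :
    IsRankOneAbelian A := by
  let _ : CommGroup A := { ‹Group A› with mul_comm := hcomm }
  have := hP.isMulTorsionFree
  obtain ⟨f, hf⟩ := hP.exists_forall_pow_mem_powers F hF.1 fun g ↦ hF.exists_pow_mem_closure hP
  have exists_zpow_eq {a : A} (ha : a ≠ 1) : ∃ m n : ℤ, m ≠ 0 ∧ n ≠ 0 ∧ a ^ m = f ^ n := by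
    obtain ⟨m, n, hm, h⟩ : ∃ m n : ℤ, m ≠ 0 ∧ a ^ m = f ^ n := by
      rcases hP.2.1 a with h | h | h
      · obtain ⟨m, hm, n, h⟩ := hf _ h
        exact ⟨m, n, by simpa using hm, by simpa using h.symm⟩
      · obtain ⟨m, hm, n, h⟩ := hf _ h
        exact ⟨-m, n, by simpa using hm, by simpa using h.symm⟩
      · exact (ha h).elim
    refine ⟨m, n, hm, fun hn ↦ ha ?_, h⟩
    rw [hn, zpow_zero] at h
    exact (IsMulTorsionFree.zpow_eq_one_iff_left hm).mp h
  refine ⟨hcomm, fun a b ha hb ↦ ?_⟩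
  obtain ⟨m, n, hm, hn, h⟩ := exists_zpow_eq ha
  obtain ⟨i, j, hi, hj, h'⟩ := exists_zpow_eq hb
  refine ⟨m * j, i * n, mul_ne_zero hm hj, mul_ne_zero hi hn, ?_⟩
  rw [zpow_mul, h, zpow_mul, h', ← zpow_mul, ← zpow_mul, mul_comm]

section Jump

variable {G : Type*} [Group G] {P : Set G} {F : Finset G}

namespace IsIsolatedBy

theorem exists_isMaximalProperConvex [Nontrivial G] (hF : IsIsolatedBy P F) (hP : IsPosCone P) :
    ∃ D, IsMaximalProperConvex P D := by
  let S : Set (Subgroup G) := {K | IsConvexFor P K ∧ K ≠ ⊤}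
  have hS : ∀ K ∈ S, IsConvexFor P K := fun K hK ↦ hK.1
  have hne : S.Nonempty := ⟨⊥, .bot hP, bot_ne_top⟩
  refine ⟨sSup S, ⟨.sSup hP hne hS, fun htop ↦ ?_⟩, fun K hK ↦ le_sSup hK⟩
  have hFS : (F : Set G) ⊆ ⋃ K ∈ S, (K : Set G) := fun f _ ↦ by
    simpa using (Subgroup.mem_sSup_of_directedOn hne (IsConvexFor.directedOn hP hS)).mp
      (htop ▸ Subgroup.mem_top f)
  obtain ⟨K, hK, hFK⟩ := DirectedOn.exists_mem_subset_of_finset_subset_biUnion hne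
    (IsConvexFor.directedOn hP hS) hFS
  obtain ⟨f, hf, -, hfK⟩ := hF.exists_mem_sdiff hP hK.1 .top hK.2.lt_top
  exact hfK (hFK hf)

theorem isRankOneAbelian_quotient {D : Subgroup G} [D.Normal] (hF : IsIsolatedBy P F)
    (hP : IsPosCone P) (hC : IsConradianCone P) (hD : IsMaximalProperConvex P D) :
    IsRankOneAbelian (G ⧸ D) :=
  have hPD := hP.quotientCone hD.1.1
  (hF.quotient hP hD.1.1).isRankOneAbelian hPD
    ((hC.isArchimedeanCone_quotientCone hP hD).mul_comm_of_isPosCone hPD)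

end IsIsolatedBy

end Jump

namespace IsRankOneAbelian

variable {G : Type*} [Group G] {B : Subgroup G}

theorem commute_of_mem (hB : IsRankOneAbelian B) {a b : G} (ha : a ∈ B) (hb : b ∈ B) :
    Commute a b :=
  congrArg Subtype.val (hB.mul_comm ⟨a, ha⟩ ⟨b, hb⟩)

theorem exists_semiconjBy_of_mul_lt [LinearOrder G] [MulLeftMono G] [B.Normal]
    (hB : IsRankOneAbelian B) {c g : G} (hc : c ∈ B) (hcg : c * g < g * c) :
    ∃ d ∈ B, ∃ u ∈ B, 1 < u ∧ SemiconjBy g d c ∧ ∀ k : ℕ, d ^ k * u ^ k = c ^ k := by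
  let d := g⁻¹ * c * g
  have hdc : d < c := (mul_assoc g⁻¹ c g).trans_lt (inv_mul_lt_iff_lt_mul.mpr hcg)
  have hd : d ∈ B := by simpa [d] using ‹B.Normal›.conj_mem c hc g⁻¹
  have hu : d⁻¹ * c ∈ B := B.mul_mem (B.inv_mem hd) hc
  exact ⟨d, hd, d⁻¹ * c, hu, lt_inv_mul_iff_lt.mpr hdc, by simp [d, SemiconjBy, mul_assoc],
    fun k ↦ by rw [← (hB.commute_of_mem hd hu).mul_pow, mul_inv_cancel_left]⟩

end IsRankOneAbelian

section BiOrdered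

variable {E : Type*} [Group E] [LinearOrder E] [MulLeftMono E] [MulRightMono E]

theorem inv_mul_lt_mul_inv_comm {a b : E} : b⁻¹ * a < a * b⁻¹ ↔ a * b < b * a := by
  rw [inv_mul_lt_iff_lt_mul, ← mul_assoc, lt_mul_inv_iff_mul_lt]

theorem mul_inv_lt_inv_mul_comm {a b : E} : a * b⁻¹ < b⁻¹ * a ↔ b * a < a * b := by
  rw [mul_inv_lt_iff_lt_mul, mul_assoc, lt_inv_mul_iff_mul_lt]

/-- The positive cone of the left order in which `g` is positive when conjugation by `g` decreases
`T`, ties being broken by the given order. -/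
def conjCone (T : E) : Set E :=
  {g | g * T < T * g ∨ g * T = T * g ∧ 1 < g}

theorem isPosCone_conjCone (T : E) : IsPosCone (conjCone T) := by
  refine .of_mul_mem ?_ (fun g ↦ ?_) (by simp [conjCone])
  · rintro a (ha | ⟨ha, ha1⟩) b (hb | ⟨hb, hb1⟩)
    · refine Or.inl ?_
      calc a * b * T = a * (b * T) := mul_assoc a b T
        _ < a * (T * b) := mul_lt_mul_right hb a
        _ = a * T * b := (mul_assoc a T b).symm
        _ < T * a * b := mul_lt_mul_left ha b
        _ = T * (a * b) := mul_assoc T a b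
    · exact Or.inl (by simpa only [mul_assoc, hb] using mul_lt_mul_left ha b)
    · exact Or.inl (by simpa only [← mul_assoc, ha] using mul_lt_mul_right hb a)
    · exact Or.inr ⟨(Commute.mul_left ha hb :), one_lt_mul' ha1 hb1⟩
  · rcases lt_trichotomy (g * T) (T * g) with h | h | h
    · exact Or.inl (Or.inl h)
    · rcases lt_trichotomy 1 g with hg | rfl | hg
      · exact Or.inl (Or.inr ⟨h, hg⟩)
      · exact Or.inr (Or.inr rfl)
      · exact Or.inr (Or.inl (Or.inr ⟨(Commute.inv_left h :), Left.one_lt_inv_iff.mpr hg⟩))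
    · exact Or.inr (Or.inl (Or.inl (inv_mul_lt_mul_inv_comm.mpr h)))

theorem mul_pow_lt_pow_mul_iff {a b : E} {n : ℕ} (hn : n ≠ 0) :
    a * b ^ n < b ^ n * a ↔ a * b < b * a := by
  rw [← mul_inv_lt_iff_lt_mul, ← conj_pow, (pow_left_strictMono hn).lt_iff_lt,
    mul_inv_lt_iff_lt_mul]

theorem pow_mul_lt_mul_pow_iff {a b : E} {n : ℕ} (hn : n ≠ 0) :
    a ^ n * b < b * a ^ n ↔ a * b < b * a := by
  rw [← inv_mul_lt_mul_inv_comm, mul_pow_lt_pow_mul_iff hn, inv_mul_lt_mul_inv_comm]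

theorem mul_lt_mul_comm_iff_of_pow_eq {b c d x y : E} {i j m n : ℕ} (hi : i ≠ 0) (hj : j ≠ 0)
    (hm : m ≠ 0) (hn : n ≠ 0) (hcd : c ^ i = d ^ j) (hxy : x ^ m = y ^ n * b)
    (hcb : Commute c b) : c * x < x * c ↔ d * y < y * d :=
  calc c * x < x * c
    _ ↔ c * x ^ m < x ^ m * c := (mul_pow_lt_pow_mul_iff hm).symm
    _ ↔ c * y ^ n < y ^ n * c := by
      rw [hxy, mul_assoc (y ^ n), ← hcb.eq, ← mul_assoc, ← mul_assoc, mul_lt_mul_iff_right]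
    _ ↔ c * y < y * c := mul_pow_lt_pow_mul_iff hn
    _ ↔ c ^ i * y < y * c ^ i := (pow_mul_lt_mul_pow_iff hi).symm
    _ ↔ d ^ j * y < y * d ^ j := by rw [hcd]
    _ ↔ d * y < y * d := pow_mul_lt_mul_pow_iff hj

variable {B : Subgroup E}

theorem commute_of_le_center [B.Normal] (hEB : IsRankOneAbelian (E ⧸ B))
    (hBE : B ≤ Subgroup.center E) (x y : E) : Commute x y := by
  have h (c : E) (hc : c ∈ B) (x : E) : Commute c x := (Subgroup.mem_center_iff.mp (hBE hc) x).symm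
  by_cases hxB : x ∈ B
  · exact h x hxB y
  by_cases hyB : y ∈ B
  · exact (h y hyB x).symm
  obtain ⟨m, n, _, hn, hxy⟩ := hEB.exists_zpow_eq_zpow x y
    (fun h ↦ hxB ((QuotientGroup.eq_one_iff x).mp h))
    (fun h ↦ hyB ((QuotientGroup.eq_one_iff y).mp h))
  rw [← QuotientGroup.mk_zpow, ← QuotientGroup.mk_zpow, QuotientGroup.eq] at hxy
  have hcomm : Commute x (x ^ m * ((x ^ m)⁻¹ * y ^ n)) :=
    ((Commute.refl x).zpow_right m).mul_right (h _ hxy x).symm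
  rw [mul_inv_cancel_left] at hcomm
  refine mul_inv_eq_iff_eq_mul.mp (zpow_left_injective hn ?_)
  simp only [conj_zpow, hcomm.eq, mul_inv_cancel_right]

theorem mul_conj_lt_conj_mul (hB : IsRankOneAbelian B) {t b f : E} (hbB : b ∈ B) (hfB : f ∈ B)
    (hft : f * t < t * f) (k : ℕ) :
    f * (b ^ k * t * (b ^ k)⁻¹) < b ^ k * t * (b ^ k)⁻¹ * f := by
  have hcomm : Commute f (b ^ k) := hB.commute_of_mem hfB (B.pow_mem hbB k)
  calc f * (b ^ k * t * (b ^ k)⁻¹) = b ^ k * (f * t) * (b ^ k)⁻¹ := by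
        simp only [← mul_assoc, hcomm.eq]
    _ < b ^ k * (t * f) * (b ^ k)⁻¹ := by gcongr
    _ = b ^ k * t * (b ^ k)⁻¹ * f := by simp only [mul_assoc, hcomm.inv_right.eq]

theorem eventually_mem_conjCone [B.Normal] (hB : IsRankOneAbelian B)
    (hEB : IsRankOneAbelian (E ⧸ B)) {t b f : E} (hbB : b ∈ B)
    (ht : ∀ c ∈ B, 1 < c → c * t < t * c) (hbf : b * f < f * b) :
    ∀ᶠ k : ℕ in .atTop, f ∈ conjCone (b ^ k * t * (b ^ k)⁻¹) := by
  obtain ⟨d, -, u, hu, hu1, hfd, hdu⟩ := hB.exists_semiconjBy_of_mul_lt hbB hbf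
  obtain ⟨p, hp, v, hv, hv1, htp, hpv⟩ := hB.exists_semiconjBy_of_mul_lt hu (ht u hu hu1)
  let w := (t * f)⁻¹ * (f * t)
  have hw : w ∈ B := QuotientGroup.eq.mp (hEB.mul_comm t f)
  obtain ⟨n, hn⟩ : ∃ n : ℕ, w < v ^ n := by
    simpa using hB.isArchimedeanCone (isPosCone_one_lt.subgroup B) ⟨v, hv⟩ hv1 ⟨w, hw⟩
  filter_upwards [Filter.eventually_ge_atTop n] with k hk
  have hwk : w * p ^ k < u ^ k := calc
    w * p ^ k = p ^ k * w := hB.commute_of_mem hw (B.pow_mem hp k)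
    _ < p ^ k * v ^ k := mul_lt_mul_right (hn.trans_le (pow_le_pow_right' hv1.le hk)) _
    _ = u ^ k := hpv k
  have hfb : b ^ k * (f * u ^ k) = f * b ^ k := by
    rw [← mul_assoc, ← (hfd.pow_right k).eq, mul_assoc, hdu]
  have hbf' : (b ^ k)⁻¹ * f = f * u ^ k * (b ^ k)⁻¹ := by
    rw [eq_mul_inv_iff_mul_eq, mul_assoc, ← hfb, inv_mul_cancel_left]
  have hlt : f * u ^ k * t < t * (f * u ^ k) := calc
    f * u ^ k * t = t * f * (w * p ^ k) := by
      rw [mul_assoc, ← (htp.pow_right k).eq]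
      simp only [w, mul_assoc, mul_inv_rev, mul_inv_cancel_left]
    _ < t * f * u ^ k := mul_lt_mul_right hwk _
    _ = t * (f * u ^ k) := mul_assoc _ _ _
  refine Or.inl ?_
  calc f * (b ^ k * t * (b ^ k)⁻¹) = b ^ k * (f * u ^ k * t) * (b ^ k)⁻¹ := by
        simp only [← mul_assoc, ← hfb]
    _ < b ^ k * (t * (f * u ^ k)) * (b ^ k)⁻¹ := by gcongr
    _ = b ^ k * t * (b ^ k)⁻¹ * f := by
      rw [mul_assoc _ _ f, hbf']
      simp only [mul_assoc]

theorem IsIsolatedBy.false_of_expanding {F : Finset E} (hF : IsIsolatedBy {g | 1 < g} F)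
    [B.Normal] (hconv : IsConvexFor {g | 1 < g} B) (hB : IsRankOneAbelian B)
    (hEB : IsRankOneAbelian (E ⧸ B)) {t b : E} (htB : t ∉ B) (hbB : b ∈ B) {c : E} (hcB : c ∈ B)
    (hc : 1 < c) (ht : ∀ c ∈ B, 1 < c → c * t < t * c)
    (hb : ∀ f, 1 < f → f ∉ B → b * f < f * b) : False := by
  have hev : ∀ᶠ k : ℕ in .atTop, ∀ f ∈ F, f ∈ conjCone (b ^ k * t * (b ^ k)⁻¹) := by
    refine (Filter.eventually_all_finset F).mpr fun f hf ↦ ?_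
    by_cases hfB : f ∈ B
    · exact .of_forall fun k ↦ Or.inl (mul_conj_lt_conj_mul hB hbB hfB (ht f hfB (hF.1 f hf)) k)
    · exact eventually_mem_conjCone hB hEB hbB ht (hb f (hF.1 f hf) hfB)
  obtain ⟨k, hk⟩ := hev.exists
  let T := b ^ k * t * (b ^ k)⁻¹
  have hcone : conjCone T = {g | 1 < g} := hF.2 _ (isPosCone_conjCone T) hk
  have hTB : T ∉ B := fun h ↦ htB (by simpa [T, mul_assoc] using ‹B.Normal›.conj_mem T h (b ^ k)⁻¹)
  obtain ⟨s, hs, hsB, hsT⟩ : ∃ s, 1 < s ∧ s ∉ B ∧ Commute s T := by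
    rcases lt_trichotomy 1 T with h | h | h
    · exact ⟨T, h, hTB, .refl T⟩
    · exact (hTB (h ▸ B.one_mem)).elim
    · exact ⟨T⁻¹, Left.one_lt_inv_iff.mpr h, by simpa using hTB, (Commute.refl T).inv_left⟩
  have hcs : c⁻¹ * s ∈ conjCone T := hcone ▸ lt_inv_mul_iff_lt.mpr (hconv.lt_of_notMem hs hsB hcB)
  have hle : c⁻¹ * s * T ≤ T * (c⁻¹ * s) := hcs.elim le_of_lt fun h ↦ h.1.le
  rw [mul_assoc c⁻¹, hsT.eq, ← mul_assoc c⁻¹, ← mul_assoc T, mul_le_mul_iff_right] at hle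
  have hcT : c * T < T * c := mul_conj_lt_conj_mul hB hbB hcB (ht c hcB hc) k
  exact hle.not_gt (mul_inv_lt_inv_mul_comm.mpr hcT)

theorem IsIsolatedBy.false_of_le_center {F : Finset E} (hF : IsIsolatedBy {g | 1 < g} F)
    [B.Normal] (hconv : IsConvexFor {g | 1 < g} B) (hEB : IsRankOneAbelian (E ⧸ B)) (hbot : B ≠ ⊥)
    (htop : B ≠ ⊤) (hBE : B ≤ Subgroup.center E) : False := by
  have hE := hF.isRankOneAbelian isPosCone_one_lt (commute_of_le_center hEB hBE)
  obtain ⟨d, hd, hd1⟩ := B.bot_or_exists_ne_one.resolve_left hbot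
  obtain ⟨s, -, hs⟩ := SetLike.exists_of_lt htop.lt_top
  have hs1 : s ≠ 1 := fun h ↦ hs (h ▸ B.one_mem)
  obtain ⟨m, n, hm, -, h⟩ := hE.exists_zpow_eq_zpow s d hs1 hd1
  exact hs (hconv.mem_of_zpow_mem isPosCone_one_lt hm (h ▸ B.zpow_mem hd n))

theorem IsIsolatedBy.false_of_isRankOneAbelian {F : Finset E} (hF : IsIsolatedBy {g | 1 < g} F)
    [B.Normal] (hconv : IsConvexFor {g | 1 < g} B) (hB : IsRankOneAbelian B)
    (hEB : IsRankOneAbelian (E ⧸ B)) (hbot : B ≠ ⊥) (htop : B ≠ ⊤) : False := by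
  have hPB := isPosCone_one_lt.subgroup B
  have hPE := isPosCone_one_lt.quotientCone hconv
  obtain ⟨d, hd1, hd, -⟩ := isPosCone_one_lt.exists_mem_notMem_of_not_le (mt le_bot_iff.mp hbot)
  obtain ⟨s, hs, -, hsB⟩ := isPosCone_one_lt.exists_mem_notMem_of_not_le (mt top_le_iff.mp htop)
  have transfer (c x : E) (hc : c ∈ B) (hc1 : 1 < c) (hxB : x ∉ B) (hx : 1 < x) :
      (c * x < x * c ↔ d * s < s * d) ∧ (x * c < c * x ↔ s * d < d * s) := by
    obtain ⟨i, j, hi, hj, hcd⟩ := hB.exists_pow_eq_pow hPB (a := ⟨c, hc⟩) (b := ⟨d, hd⟩) hc1 hd1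
    obtain ⟨m, n, hm, hn, hxs⟩ := hEB.exists_pow_eq_pow hPE (a := x) (b := s)
      ⟨x, ⟨hx, hxB⟩, rfl⟩ ⟨s, ⟨hs, hsB⟩, rfl⟩
    replace hcd : c ^ i = d ^ j := congrArg Subtype.val hcd
    have hb : (s ^ n)⁻¹ * x ^ m ∈ B := QuotientGroup.eq.mp hxs.symm
    have hxs : x ^ m = s ^ n * ((s ^ n)⁻¹ * x ^ m) := (mul_inv_cancel_left _ _).symm
    refine ⟨mul_lt_mul_comm_iff_of_pow_eq hi hj hm hn hcd hxs (hB.commute_of_mem hc hb), ?_⟩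
    rw [← inv_mul_lt_mul_inv_comm, ← inv_mul_lt_mul_inv_comm (a := s)]
    exact mul_lt_mul_comm_iff_of_pow_eq hi hj hm hn (by simp [hcd]) hxs
      (hB.commute_of_mem (B.inv_mem hc) hb)
  rcases lt_trichotomy (d * s) (s * d) with h | h | h
  · exact hF.false_of_expanding hconv hB hEB hsB hd hd hd1
      (fun c hc hc1 ↦ (transfer c s hc hc1 hsB hs).1.mpr h)
      fun x hx hxB ↦ (transfer d x hd hd1 hxB hx).1.mpr h
  · refine hF.false_of_le_center hconv hEB hbot htop (isPosCone_one_lt.le_of_forall_mem ?_)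
    intro c hc1 hc
    have hcent : ⊤ ≤ Subgroup.centralizer {c} := isPosCone_one_lt.le_of_forall_mem fun x hx _ ↦ by
      rw [Subgroup.mem_centralizer_singleton_iff]
      by_cases hxB : x ∈ B
      · exact hB.commute_of_mem hxB hc
      · obtain ⟨h₁, h₂⟩ := transfer c x hc hc1 hxB hx
        exact le_antisymm (not_lt.mp (mt h₁.mp h.not_lt)) (not_lt.mp (mt h₂.mp h.not_gt))
    exact Subgroup.mem_center_iff.mpr fun x ↦
      Subgroup.mem_centralizer_singleton_iff.mp (hcent (Subgroup.mem_top x))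
  · refine hF.false_of_expanding hconv hB hEB (t := s⁻¹) (by simpa using hsB) (B.inv_mem hd) hd hd1
      (fun c hc hc1 ↦ ?_) fun x hx hxB ↦ ?_
    · exact mul_inv_lt_inv_mul_comm.mpr ((transfer c s hc hc1 hsB hs).2.mpr h)
    · exact inv_mul_lt_mul_inv_comm.mpr ((transfer d x hd hd1 hxB hx).2.mpr h)

end BiOrdered

theorem IsIsolatedBy.exists_conj_notMem {G : Type*} [Group G] {P : Set G} {F : Finset G}
    (hF : IsIsolatedBy P F) (hP : IsPosCone P) {B : Subgroup G} [B.Normal]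
    (hconv : IsConvexFor P B) (hB : IsRankOneAbelian B) (hGB : IsRankOneAbelian (G ⧸ B))
    (hbot : B ≠ ⊥) (htop : B ≠ ⊤) : ∃ t, ∃ x ∈ P, t * x * t⁻¹ ∉ P := by
  by_contra! h
  obtain ⟨_, _, rfl⟩ := hP.exists_linearOrder
  have := mulRightMono_of_one_lt_conj h
  exact hF.false_of_isRankOneAbelian hconv hB hGB hbot htop

section Reversal

variable {G : Type*} [Group G] {D : Subgroup G}

theorem mem_iff_mem_of_mk_pow_eq [D.Normal] {R : Set G} (hR : IsPosCone R)
    (hD : IsConvexFor R D) {x y : G} (hx : x ∉ D) (hy : y ∉ D) {m n : ℕ} (hm : m ≠ 0) (hn : n ≠ 0)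
    (h : (x : G ⧸ D) ^ m = (y : G ⧸ D) ^ n) : x ∈ R ↔ y ∈ R := by
  have mk_iff {z : G} (hz : z ∉ D) : z ∈ R ↔ (z : G ⧸ D) ∈ quotientCone R D := by
    simp [mk_mem_quotientCone_iff hR hD, hz]
  have hQ := hR.quotientCone hD
  rw [mk_iff hx, mk_iff hy, ← hQ.pow_mem_iff hm, h, hQ.pow_mem_iff hn]

/-- A left order of a torsion-free group of rank one is determined by the sign of one element. -/
theorem IsRankOneAbelian.mem_iff_mem_or_mem_iff_notMem [D.Normal]
    (hD : IsRankOneAbelian (G ⧸ D)) {x y : G} (hx : x ∉ D) (hy : y ∉ D) :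
    (∀ R, IsPosCone R → IsConvexFor R D → (x ∈ R ↔ y ∈ R)) ∨
      ∀ R, IsPosCone R → IsConvexFor R D → (x ∈ R ↔ y ∉ R) := by
  have mk_ne_one {z : G} (hz : z ∉ D) : (z : G ⧸ D) ≠ 1 := by simpa using hz
  obtain ⟨m, n, hm, hn, h⟩ := hD.exists_zpow_eq_zpow _ _ (mk_ne_one hx) (mk_ne_one hy)
  obtain ⟨k, l, hk, hl, h | h⟩ : ∃ k l : ℕ, k ≠ 0 ∧ l ≠ 0 ∧
      ((x : G ⧸ D) ^ k = (y : G ⧸ D) ^ l ∨ (x : G ⧸ D) ^ k = ((y⁻¹ : G) : G ⧸ D) ^ l) := by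
    refine ⟨m.natAbs, n.natAbs, by simpa, by simpa, ?_⟩
    rcases m.natAbs_eq with hm' | hm' <;> rcases n.natAbs_eq with hn' | hn' <;>
      rw [hm', hn'] at h <;>
      simp only [zpow_neg, zpow_natCast, inv_eq_iff_eq_inv, inv_inv] at h
    exacts [Or.inl h, Or.inr (by simp [h]), Or.inr (by simp [h]), Or.inl h]
  · exact Or.inl fun R hR hRD ↦ mem_iff_mem_of_mk_pow_eq hR hRD hx hy hk hl h
  · refine Or.inr fun R hR hRD ↦ ?_
    rw [mem_iff_mem_of_mk_pow_eq hR hRD hx (by simpa using hy) hk hl h,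
      hR.inv_mem_iff_notMem (ne_of_mem_of_not_mem D.one_mem hy).symm]

theorem IsMaximalProperConvex.characteristic {P : Set G} (hD : IsMaximalProperConvex P D)
    (h : ∀ Q, IsPosCone Q → IsConvexFor Q D) (hP : IsPosCone P) : D.Characteristic := by
  refine Subgroup.characteristic_iff_comap_le.mpr fun φ ↦ hD.2 ⟨?_, fun htop ↦ hD.1.2 ?_⟩
  · have := (h _ (hP.preimage (φ := φ.symm.toMonoidHom) φ.symm.injective)).comap φ.toMonoidHom
    convert this using 1
    ext x
    simp
  · rw [eq_top_iff, ← Subgroup.map_comap_eq_self_of_surjective (f := φ.toMonoidHom) φ.surjective D,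
      htop, Subgroup.map_top_of_surjective _ φ.surjective]

/-- The automorphism `φ` reverses the sign, for every left order, of each element outside `M`. -/
def IsReversing (φ : MulAut G) (M : Subgroup G) : Prop :=
  ∀ R, IsPosCone R → ∀ z ∉ M, (z ∈ R ↔ φ z ∉ R)

theorem IsReversing.inv {φ : MulAut G} {M : Subgroup G} (h : IsReversing φ M) :
    IsReversing φ⁻¹ M := fun R hR z hz ↦ by
  have := h _ (hR.preimage (φ := φ⁻¹.toMonoidHom) φ⁻¹.injective) z hz
  simp only [Set.mem_preimage, MulEquiv.toMonoidHom_eq_coe, MonoidHom.coe_coe,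
    MulAut.inv_apply_self] at this
  tauto

theorem apply_notMem_of_characteristic {M : Subgroup G} [hM : M.Characteristic] (φ : MulAut G)
    {z : G} (hz : z ∉ M) : φ z ∉ M := by
  rwa [← hM.fixed φ] at hz

theorem isReversing_of_notMem {M : Subgroup G} [M.Characteristic] (hM : IsRankOneAbelian (G ⧸ M))
    (hconv : ∀ R, IsPosCone R → IsConvexFor R M) {φ : MulAut G} {P : Set G} (hP : IsPosCone P)
    {x : G} (hx : x ∉ M) (hxP : x ∈ P) (hφx : φ x ∉ P) : IsReversing φ M := fun R hR z hz ↦ by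
  have hR' := hR.preimage (φ := φ.toMonoidHom) φ.injective
  have hφxM := apply_notMem_of_characteristic φ hx
  have hopp : x ∈ R ↔ φ x ∉ R := (hM.mem_iff_mem_or_mem_iff_notMem hx hφxM).resolve_left
    (fun h ↦ hφx ((h P hP (hconv P hP)).mp hxP)) R hR (hconv R hR)
  rcases hM.mem_iff_mem_or_mem_iff_notMem hz hx with h | h <;>
  · have h1 := h R hR (hconv R hR)
    have h2 := h _ hR' (hconv _ hR')
    simp only [Set.mem_preimage, MulEquiv.toMonoidHom_eq_coe, MonoidHom.coe_coe] at h2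
    tauto

theorem exists_mul_le_of_normal [LinearOrder G] [MulLeftMono G] [hD : D.Normal] (x : G) :
    ∀ s ∈ D.toSubmonoid, ∀ t ∈ D.toSubmonoid, x ≤ s → ∃ u ∈ D.toSubmonoid, x * t ≤ u :=
  fun s hs t ht hx ↦ ⟨x * t * x⁻¹ * s, D.mul_mem (hD.conj_mem t ht x) hs, by
    simpa using mul_le_mul_right hx (x * t * x⁻¹)⟩

namespace IsReversing

variable {M : Subgroup D} {t : G}

theorem notMem_convexClosure [LinearOrder G] [MulLeftMono G] [D.Normal] [M.Characteristic]
    (hrev : IsReversing (MulAut.conjNormal t) M) (hDM : IsRankOneAbelian (D ⧸ M))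
    (hconv : IsConvexFor (D.subtype ⁻¹' {g : G | 1 < g}) M) (htop : M ≠ ⊤) (ht : 1 ≤ t) :
    t ∉ convexClosure D.toSubmonoid exists_mul_le_of_normal := by
  rintro ⟨d, hd, htd, -⟩
  have hP := isPosCone_one_lt.subgroup D
  obtain ⟨e, he, -, heM⟩ := hP.exists_mem_notMem_of_not_le (mt top_le_iff.mp htop)
  have heM' : e⁻¹ ∉ M := by simpa using heM
  have hpos : MulAut.conjNormal t e⁻¹ ∈ D.subtype ⁻¹' {g : G | 1 < g} :=
    not_not.mp ((hrev _ hP _ heM').not.mp (hP.inv_notMem he))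
  obtain ⟨n, hn⟩ := hDM.isArchimedeanCone (hP.quotientCone hconv) _
    ⟨_, ⟨hpos, apply_notMem_of_characteristic _ heM'⟩, rfl⟩ ((⟨d, hd⟩ : D) : D ⧸ M)
  have hdn : d < t * ((e : G) ^ n)⁻¹ * t⁻¹ := by
    have h : (⟨d, hd⟩ : D)⁻¹ * (MulAut.conjNormal t e⁻¹) ^ n ∈ D.subtype ⁻¹' {g : G | 1 < g} :=
      ((mk_mem_quotientCone_iff hP hconv).mp hn).1
    rw [← map_pow, inv_pow] at h
    exact lt_inv_mul_iff_lt.mp h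
  refine (htd.trans_lt hdn).not_ge ?_
  calc t * ((e : G) ^ n)⁻¹ * t⁻¹ ≤ t * ((e : G) ^ n)⁻¹ :=
        mul_le_of_le_one_right' (Left.inv_le_one_iff.mpr ht)
    _ ≤ t := mul_le_of_le_one_right'
        (Left.inv_le_one_iff.mpr (one_le_pow_of_one_le' (le_of_lt he) n))

theorem isConvexFor [D.Normal] [M.Characteristic] (hrev : IsReversing (MulAut.conjNormal t) M)
    (hGD : IsRankOneAbelian (G ⧸ D)) (hDM : IsRankOneAbelian (D ⧸ M)) (htop : M ≠ ⊤)
    (hconv : ∀ R, IsPosCone R → IsConvexFor R M) {Q : Set G} (hQ : IsPosCone Q) :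
    IsConvexFor Q D := by
  obtain ⟨_, _, rfl⟩ := hQ.exists_linearOrder
  let K : Subgroup G := convexClosure D.toSubmonoid exists_mul_le_of_normal
  have hDK : D ≤ K := isPosCone_one_lt.le_of_forall_mem fun x hx hxD ↦
    mem_convexClosure_of_le (le_of_lt hx) hxD le_rfl
  have hK : IsConvexFor {g : G | 1 < g} K := isConvexFor_convexClosure
  have hMD := hconv _ (isPosCone_one_lt.subgroup D)
  have htK : t ∉ K := by
    rcases le_total 1 t with ht | ht
    · exact hrev.notMem_convexClosure hDM hMD htop ht
    · rw [← K.inv_mem_iff]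
      refine IsReversing.notMem_convexClosure (M := M) ?_ hDM hMD htop (Left.one_le_inv_iff.mpr ht)
      simpa only [map_inv] using hrev.inv
  suffices hKD : K ≤ D from le_antisymm hDK hKD ▸ hK
  intro v hv
  by_contra hvD
  obtain ⟨a, b, -, hb, h⟩ := hGD.exists_zpow_eq_zpow (v : G ⧸ D) (t : G ⧸ D)
    (by simpa using hvD) (by simpa using fun h ↦ htK (hDK h))
  have hvt : (v ^ a)⁻¹ * t ^ b ∈ K := hDK (QuotientGroup.eq.mp h)
  exact htK (hK.mem_of_zpow_mem isPosCone_one_lt hb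
    ((K.mul_mem_cancel_left (K.inv_mem (K.zpow_mem hv a))).mp hvt))

end IsReversing

end Reversal

section Induction

variable {G : Type*} [Group G] {P : Set G} {F : Finset G} {D : Subgroup G}

theorem IsRankOneAbelian.map_mk {M : Subgroup D} [M.Normal] {N : Subgroup G} [N.Normal]
    (hM : IsRankOneAbelian (D ⧸ M)) (hMN : M.map D.subtype = N) :
    IsRankOneAbelian (D.map (QuotientGroup.mk' N)) :=
  hM.of_surjective (φ := QuotientGroup.lift M ((QuotientGroup.mk' N).subgroupMap D) fun x hx ↦
      Subtype.ext ((QuotientGroup.eq_one_iff (x : G)).mpr (hMN ▸ ⟨x, hx, rfl⟩)))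
    (QuotientGroup.lift_surjective_of_surjective _ _ (MonoidHom.subgroupMap_surjective _ _) _)

theorem IsConvexFor.map_mk {N : Subgroup G} [N.Normal] (hD : IsConvexFor P D) (hP : IsPosCone P)
    (hN : IsConvexFor P N) : IsConvexFor (quotientCone P N) (D.map (QuotientGroup.mk' N)) := by
  rintro _ ⟨x, ⟨hx, -⟩, rfl⟩ _ ⟨c, hc, rfl⟩ h
  exact ⟨x, hD x hx c hc ((mk_mem_quotientCone_iff hP hN (x := x⁻¹ * c)).mp h).1, rfl⟩

theorem IsIsolatedBy.exists_conjNormal_notMem (hF : IsIsolatedBy P F) (hP : IsPosCone P)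
    [D.Normal] {M : Subgroup D} [M.Characteristic] (hD : IsConvexFor P D)
    (hM : IsConvexFor (D.subtype ⁻¹' P) M) (hGD : IsRankOneAbelian (G ⧸ D))
    (hDM : IsRankOneAbelian (D ⧸ M)) (hDtop : D ≠ ⊤) (hMtop : M ≠ ⊤) :
    ∃ t : G, ∃ z ∉ M, (z : G) ∈ P ∧ (MulAut.conjNormal t z : G) ∉ P := by
  let N := M.map D.subtype
  have hND : N ≤ D := Subgroup.map_subtype_le M
  have : N.Normal := ConjAct.normal_of_characteristic_of_normal
  have hN : IsConvexFor P N := hM.map_subtype hD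
  have hbot : D.map (QuotientGroup.mk' N) ≠ ⊥ := fun h ↦ hMtop <| by
    rw [Subgroup.map_eq_bot_iff, QuotientGroup.ker_mk'] at h
    exact eq_top_iff.mpr fun x _ ↦ by simpa [N] using h x.2
  have htop : D.map (QuotientGroup.mk' N) ≠ ⊤ := fun h ↦ hDtop <| by
    rw [← Subgroup.comap_map_eq_self ((QuotientGroup.ker_mk' N).trans_le hND), h,
      Subgroup.comap_top]
  obtain ⟨t, _, ⟨z, ⟨hz, hzN⟩, rfl⟩, htz⟩ := (hF.quotient hP hN).exists_conj_notMem
    (hP.quotientCone hN) (hD.map_mk hP hN) (hDM.map_mk rfl)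
    (hGD.of_surjective (QuotientGroup.quotientQuotientEquivQuotient N D hND).symm.surjective)
    hbot htop
  obtain ⟨t, rfl⟩ := QuotientGroup.mk_surjective t
  have htzP : t * z * t⁻¹ ∉ P := fun h ↦ htz ⟨t * z * t⁻¹,
    ⟨h, fun h ↦ hzN (by simpa [mul_assoc] using ‹N.Normal›.conj_mem _ h t⁻¹)⟩, rfl⟩
  by_cases hzD : z ∈ D
  · exact ⟨t, ⟨z, hzD⟩, fun h ↦ hzN ⟨_, h, rfl⟩, hz, htzP⟩
  · have hcomm : z⁻¹ * (t * z * t⁻¹) ∈ D := by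
      rw [← QuotientGroup.eq]
      simp [hGD.mul_comm t z]
    exact (htzP (by simpa using hD.mul_mem_of_left_notMem hP hz hzD hcomm)).elim

theorem IsIsolatedBy.isConvexFor_of_isMaximalProperConvex (hF : IsIsolatedBy P F)
    (hP : IsPosCone P) (hC : IsConradianCone P) (hD : IsMaximalProperConvex P D)
    (ih : ∀ R : Set D, IsPosCone R → ∀ M, IsConvexFor (D.subtype ⁻¹' P) M → IsConvexFor R M)
    {Q : Set G} (hQ : IsPosCone Q) : IsConvexFor Q D := by
  obtain rfl | hbot := eq_or_ne D ⊥
  · exact IsConvexFor.bot hQ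
  have : Nontrivial D := D.nontrivial_iff_ne_bot.mpr hbot
  have : D.Normal := hC.normal hP hD
  have hGD := hF.isRankOneAbelian_quotient hP hC hD
  have hPD := hP.subgroup D
  have hCD := hC.preimage D.subtype
  obtain ⟨M, hM⟩ := (hF.subgroup hP hD.1.1).exists_isMaximalProperConvex hPD
  have hconv (R : Set D) (hR : IsPosCone R) : IsConvexFor R M := ih R hR M hM.1.1
  have : M.Characteristic := hM.characteristic hconv hPD
  have hDM := (hF.subgroup hP hD.1.1).isRankOneAbelian_quotient hPD hCD hM
  obtain ⟨t, z, hzM, hz, htz⟩ := hF.exists_conjNormal_notMem hP hD.1.1 hM.1.1 hGD hDM hD.1.2 hM.1.2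
  exact (isReversing_of_notMem hDM hconv hPD hzM hz htz).isConvexFor hGD hDM hM.1.2 hconv hQ

open Classical in
theorem IsIsolatedBy.card_subtype_lt (hF : IsIsolatedBy P F) (hP : IsPosCone P)
    (hD : IsMaximalProperConvex P D) : (F.subtype (· ∈ D)).card < F.card := by
  obtain ⟨f, hf, -, hfD⟩ := hF.exists_mem_sdiff hP hD.1.1 IsConvexFor.top hD.1.2.lt_top
  rw [Finset.card_subtype]
  exact Finset.card_lt_card (Finset.filter_ssubset.mpr ⟨f, hf, hfD⟩)

theorem IsIsolatedBy.isConvexFor_of_isPosCone (hF : IsIsolatedBy P F) (hP : IsPosCone P)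
    (hC : IsConradianCone P) {Q : Set G} (hQ : IsPosCone Q) {K : Subgroup G}
    (hK : IsConvexFor P K) : IsConvexFor Q K := by
  classical
  induction hn : F.card using Nat.strong_induction_on generalizing G with | _ n ih
  cases subsingleton_or_nontrivial G
  · exact Subsingleton.elim ⊤ K ▸ IsConvexFor.top
  obtain ⟨D, hD⟩ := hF.exists_isMaximalProperConvex hP
  have ih (R : Set D) (hR : IsPosCone R) (M) (hM : IsConvexFor (D.subtype ⁻¹' P) M) :
      IsConvexFor R M :=
    ih _ (hn ▸ hF.card_subtype_lt hP hD) (hF.subgroup hP hD.1.1) (hP.subgroup D)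
      (hC.preimage D.subtype) hR hM rfl
  obtain rfl | htop := eq_or_ne K ⊤
  · exact IsConvexFor.top
  have hKD := (ih _ (hQ.subgroup D) _ (hK.comap D.subtype)).map_subtype
    (hF.isConvexFor_of_isMaximalProperConvex hP hC hD ih hQ)
  rwa [← Subgroup.subgroupOf, Subgroup.map_subgroupOf_eq_of_le (hD.2 ⟨hK, htop⟩)] at hKD

theorem IsIsolatedBy.finite_setOf_isPosCone (hF : IsIsolatedBy P F) (hP : IsPosCone P)
    (hC : IsConradianCone P) : {Q : Set G | IsPosCone Q}.Finite := by
  classical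
  induction hn : F.card using Nat.strong_induction_on generalizing G with | _ n ih
  cases subsingleton_or_nontrivial G
  · exact Set.toFinite _
  obtain ⟨D, hD⟩ := hF.exists_isMaximalProperConvex hP
  have : D.Normal := hC.normal hP hD
  have hconv (Q : Set G) (hQ : IsPosCone Q) : IsConvexFor Q D :=
    hF.isConvexFor_of_isPosCone hP hC hQ hD.1.1
  obtain ⟨x, hx⟩ := SetLike.exists_not_mem_of_ne_top D hD.1.2
  refine Set.Finite.of_injOn (f := fun Q ↦ (D.subtype ⁻¹' Q, x ∈ Q))
    (t := {R | IsPosCone R} ×ˢ Set.univ) (fun Q hQ ↦ ⟨IsPosCone.subgroup hQ D, trivial⟩) ?_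
    ((ih _ (hn ▸ hF.card_subtype_lt hP hD) (hF.subgroup hP hD.1.1) (hP.subgroup D)
      (hC.preimage D.subtype) rfl).prod Set.finite_univ)
  intro Q hQ R hR h
  obtain ⟨hQR, hxQR⟩ : D.subtype ⁻¹' Q = D.subtype ⁻¹' R ∧ (x ∈ Q) = (x ∈ R) := Prod.ext_iff.mp h
  ext y
  by_cases hy : y ∈ D
  · exact Set.ext_iff.mp hQR ⟨y, hy⟩
  · rcases (hF.isRankOneAbelian_quotient hP hC hD).mem_iff_mem_or_mem_iff_notMem hy hx with h | h
    · rw [h Q hQ (hconv Q hQ), h R hR (hconv R hR), hxQR]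
    · rw [h Q hQ (hconv Q hQ), h R hR (hconv R hR), hxQR]

end Induction

section Soul

variable {Γ : Type*} [Group Γ] [LinearOrder Γ]

theorem IsConradianOn.bot : IsConradianOn (⊥ : Subgroup Γ) :=
  fun _ hf _ _ hf1 ↦ absurd hf hf1.ne'

theorem IsConradianOn.sSup {S : Set (Subgroup Γ)} (hne : S.Nonempty) (hdir : DirectedOn (· ≤ ·) S)
    (hS : ∀ K ∈ S, IsConradianOn K) : IsConradianOn (sSup S) := by
  intro f hf g hg hf1 hg1
  obtain ⟨K, hK, hfK⟩ := (Subgroup.mem_sSup_of_directedOn hne hdir).mp hf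
  obtain ⟨L, hL, hgL⟩ := (Subgroup.mem_sSup_of_directedOn hne hdir).mp hg
  obtain ⟨M, hM, hKM, hLM⟩ := hdir K hK L hL
  exact hS M hM f (hKM hfK) g (hLM hgL) hf1 hg1

variable (Γ) in
/-- The Conradian soul: the union of the convex subgroups on which the order is Conradian. As
these form a chain, it is the largest of them. -/
def conradianSoul : Subgroup Γ :=
  sSup {K | IsConvexSubgroup K ∧ IsConradianOn K}

theorem le_conradianSoul {K : Subgroup Γ} (hK : IsConvexSubgroup K) (hC : IsConradianOn K) :
    K ≤ conradianSoul Γ :=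
  le_sSup ⟨hK, hC⟩

theorem monotone_mul_pow {δ : Γ} (hδ : Monotone (· * δ)) (n : ℕ) : Monotone (· * δ ^ n) := by
  simpa only [mul_right_iterate] using hδ.iterate n

theorem exists_mul_le_of_monotone_mul {δ : Γ} (hδ : Monotone (· * δ)) (x : Γ) :
    ∀ s ∈ Submonoid.powers δ, ∀ t ∈ Submonoid.powers δ, x ≤ s →
      ∃ u ∈ Submonoid.powers δ, x * t ≤ u := by
  rintro s hs _ ⟨n, rfl⟩ hx
  exact ⟨s * δ ^ n, mul_mem hs ⟨n, rfl⟩, monotone_mul_pow hδ n hx⟩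

variable [MulLeftMono Γ]

theorem nonempty_setOf_isConvexSubgroup_and_isConradianOn :
    {K : Subgroup Γ | IsConvexSubgroup K ∧ IsConradianOn K}.Nonempty :=
  ⟨⊥, isConvexSubgroup_iff_isConvexFor.mpr (IsConvexFor.bot isPosCone_one_lt), IsConradianOn.bot⟩

theorem isConvexFor_conradianSoul : IsConvexFor {g | 1 < g} (conradianSoul Γ) :=
  IsConvexFor.sSup isPosCone_one_lt nonempty_setOf_isConvexSubgroup_and_isConradianOn
    fun _ hK ↦ isConvexSubgroup_iff_isConvexFor.mp hK.1

theorem isConradianOn_conradianSoul : IsConradianOn (conradianSoul Γ) :=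
  IsConradianOn.sSup nonempty_setOf_isConvexSubgroup_and_isConradianOn
    (IsConvexFor.directedOn isPosCone_one_lt fun _ hK ↦ isConvexSubgroup_iff_isConvexFor.mp hK.1)
    fun _ hK ↦ hK.2

theorem pow_le_pow_left_of_monotone_mul {δ g : Γ} (hδ : Monotone (· * δ)) (hg : δ ≤ g) (n : ℕ) :
    δ ^ n ≤ g ^ n := by
  induction n with
  | zero => simp
  | succ n ih =>
    rw [pow_succ, pow_succ]
    exact (hδ ih).trans (mul_le_mul_right hg _)

theorem isConradianOn_convexClosure_powers {δ : Γ} (hδ : 1 < δ)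
    (h : ∀ g, 1 < g → g ≤ δ → StrictMono (· * g)) :
    IsConradianOn (convexClosure (Submonoid.powers δ)
      (exists_mul_le_of_monotone_mul (h δ hδ le_rfl).monotone)) := by
  intro f _ g hg hf1 hg1
  have hmono := (h δ hδ le_rfl).monotone
  rcases le_total g δ with hgδ | hδg
  · exact ⟨1, one_pos, by simpa using h g hg1 hgδ hf1⟩
  obtain ⟨_, ⟨n, rfl⟩, hgn, -⟩ := hg
  refine ⟨n + 1, n.succ_pos, ?_⟩
  calc g ≤ δ ^ n := hgn
    _ < δ ^ (n + 1) := pow_lt_pow_right' hδ n.lt_succ_self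
    _ ≤ f * δ ^ (n + 1) := by simpa using monotone_mul_pow hmono (n + 1) hf1.le
    _ ≤ f * g ^ (n + 1) := mul_le_mul_right (pow_le_pow_left_of_monotone_mul hmono hδg _) f

namespace IsIsolatedBy

variable {F : Finset Γ}

/-- The conjugate by `g` of the order still makes `F` positive, hence is the order itself. -/
theorem strictMono_mul_right (hF : IsIsolatedBy {g : Γ | 1 < g} F) {g : Γ} (hg : 1 < g)
    (hgF : ∀ f ∈ F, g ≤ f) : StrictMono (· * g) := by
  intro x y hxy
  have hQ := hF.2 _ (isPosCone_one_lt.preimage (φ := (MulAut.conj g⁻¹).toMonoidHom)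
    (MulAut.conj g⁻¹).injective) fun f hf ↦ by
      have : g < f * g := (hgF f hf).trans_lt (lt_mul_of_one_lt_right' f hg)
      simpa [mul_assoc]
  have hmem : x⁻¹ * y ∈ {g : Γ | 1 < g} := lt_inv_mul_iff_lt.mpr hxy
  rw [← hQ] at hmem
  simpa [mul_assoc] using hmem

theorem conradianSoul_ne_bot [Nontrivial Γ] (hF : IsIsolatedBy {g : Γ | 1 < g} F) :
    conradianSoul Γ ≠ ⊥ := by
  obtain ⟨p, hp, -⟩ := isPosCone_one_lt.exists_mem_notMem_of_not_le
    (mt le_bot_iff.mp (top_ne_bot (α := Subgroup Γ)))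
  let δ := (insert p F).min' (Finset.insert_nonempty p F)
  have hδ : 1 < δ := (Finset.lt_min'_iff _ _).mpr fun f hf ↦
    (Finset.mem_insert.mp hf).elim (fun h ↦ h ▸ hp) (hF.1 f)
  have hmono (g : Γ) (hg : 1 < g) (hgδ : g ≤ δ) : StrictMono (· * g) :=
    hF.strictMono_mul_right hg fun f hf ↦
      hgδ.trans (Finset.min'_le _ _ (Finset.mem_insert_of_mem hf))
  have hle := le_conradianSoul (isConvexSubgroup_iff_isConvexFor.mpr isConvexFor_convexClosure)
    (isConradianOn_convexClosure_powers hδ hmono)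
  intro h
  exact hδ.ne' (Subgroup.mem_bot.mp
    (h ▸ hle (mem_convexClosure_of_le hδ.le (Submonoid.mem_powers δ) le_rfl)))

theorem finite_setOf_isPosCone_conradianSoul (hF : IsIsolatedBy {g : Γ | 1 < g} F) :
    {P : Set (conradianSoul Γ) | IsPosCone P}.Finite := by
  classical
  exact (hF.subgroup isPosCone_one_lt isConvexFor_conradianSoul).finite_setOf_isPosCone
    (isPosCone_one_lt.subgroup _) isConradianOn_conradianSoul.isConradianCone

end IsIsolatedBy

end Soul

/-- If `≤` is an isolated point of the space of left orderings of a nontrivial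
group `Γ` (there is a finite set `F` of positive elements such that the only
positive cone containing `F` is the positive cone of `≤`), then the Conradian soul
of `(Γ, ≤)` is nontrivial and admits only finitely many orderings. -/
theorem isolated_ordering_soul_nontrivial_finite (Γ : Type*) [Group Γ]
    [LinearOrder Γ] [Nontrivial Γ] [CovariantClass Γ Γ (· * ·) (· ≤ ·)]
    (F : Finset Γ) (hFpos : ∀ f ∈ F, 1 < f)
    (hiso : ∀ Q : Set Γ, IsPosCone Q → (∀ f ∈ F, f ∈ Q) → Q = {g : Γ | 1 < g}) :
    ∃ C : Subgroup Γ, C ≠ ⊥ ∧ IsConvexSubgroup C ∧ IsConradianOn C ∧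
      (∀ K : Subgroup Γ, IsConvexSubgroup K → IsConradianOn K → K ≤ C) ∧
      {P : Set C | IsPosCone P}.Finite := by
  have hF : IsIsolatedBy {g : Γ | 1 < g} F := ⟨hFpos, hiso⟩
  exact ⟨conradianSoul Γ, hF.conradianSoul_ne_bot,
    isConvexSubgroup_iff_isConvexFor.mpr isConvexFor_conradianSoul, isConradianOn_conradianSoul,
    fun _ ↦ le_conradianSoul, hF.finite_setOf_isPosCone_conradianSoul⟩
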